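/- Let G be a finitely generated group admitting a minimal, non-elliptic action without inversions on a simplicial tree T; let p ∈ T be a vertex with stabiliser V, and assume every edge group E ≤ V of an edge incident to p is finitely generated, undistorted in G, and relatively wide in V. Let Δ ⊆ Γ be Cayley graphs of V and G with respect to finite generating sets S_V ⊆ S_G. Then for every Morse gauge N there exists a Morse gauge N' such that every N-Morse geodesic ray in Δ is an N'-Morse quasi-geodesic in Γ. -/

import Mathlib

/-!
Let `V` be the stabiliser of `p`. The argument compares detours around a Morse ray `γ` of
`Cay(V)` measured in `V` with detours measured in `G`.

* Divergence. An `N`-Morse geodesic ray of a Cayley graph has superlinear divergence, uniformly in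
  `N`: at large scales `r`, no path of length linear in `r` joins two points of the ray on opposite
  sides of a ball of radius `r` centred on it while avoiding a fixed proportion of that ball. This
  is `morse_divergence`; such a detour would yield, by minimising a weighted length, a
  quasi-geodesic with controlled constants that strays too far from the ray.
* Wideness. If no two points of the limit set of an edge group `E` are separated by a cut point in
  any asymptotic cone of `V`, then at finite scale any two points of `E` are joined in `V` by paths
  of linear length avoiding balls of linear radius far from both ends (`wide_finite_scale`).
* Excursions. A path of `Cay(G)` with endpoints in `V` consists of steps near `V` and of
  excursions into branches of the tree at `p`. The entry and exit points of an excursion lie near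
  one coset of one of finitely many edge groups (`exists_excursion`, `path_decomposition`). Since
  edge groups are undistorted in `G`, so is `V` (`ExcData.undistorted`). Replacing every excursion
  by the path given by wideness turns a linear detour in `G` into a linear detour in `V`, which the
  divergence estimate forbids (`ExcData.no_detour`).
* Stability. A sequence without linear detours in `Cay(G)` is Morse: it stays close to every
  quasi-geodesic with endpoints on it (`seq_near_qg`), and conversely the quasi-geodesic stays
  close to it (`qg_near_seq`, `qg_near_of_no_detour`). All constants depend only on `N`.
-/

open Set Filter Topology
open scoped ENNReal

namespace MorseGoG

/-! ## Metric notions relative to an explicit distance function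

Throughout, distances are given by an explicit function `d : X → X → ℝ`, so that the same
notions apply to metric spaces (`d = dist`), to groups with word metrics, and to subgroups
with their own word metrics. -/

variable {X : Type*}

/-- `γ` is a `C`-quasi-geodesic on the parameter set `I ⊆ ℝ` with respect to `d`:
`C ≥ 1` and `|s−t|/C − C ≤ d (γ s) (γ t) ≤ C|s−t| + C` for all `s, t ∈ I`. -/
def IsQG (d : X → X → ℝ) (C : ℝ) (I : Set ℝ) (γ : ℝ → X) : Prop :=
  1 ≤ C ∧ ∀ s ∈ I, ∀ t ∈ I,
    |s - t| / C - C ≤ d (γ s) (γ t) ∧ d (γ s) (γ t) ≤ C * |s - t| + C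

/-- `x` lies in the (closed) `r`-neighbourhood of `A` with respect to `d`. -/
def InNbhd (d : X → X → ℝ) (A : Set X) (r : ℝ) (x : X) : Prop :=
  ∃ a ∈ A, d x a ≤ r

/-- The set `A` (e.g. the image of a quasi-geodesic) is `N`-Morse with respect to `d`:
every `C`-quasi-geodesic segment with endpoints on `A` is contained in the
`N C`-neighbourhood of `A`. -/
def MorseSet (d : X → X → ℝ) (N : ℝ → ℝ) (A : Set X) : Prop :=
  ∀ C : ℝ, 1 ≤ C → ∀ a b : ℝ, a ≤ b → ∀ α : ℝ → X,
    IsQG d C (Set.Icc a b) α → α a ∈ A → α b ∈ A →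
    ∀ t ∈ Set.Icc a b, InNbhd d A (N C) (α t)

/-- `A` is Morse: it is `N`-Morse for some Morse gauge `N`. -/
def IsMorse (d : X → X → ℝ) (A : Set X) : Prop := ∃ N : ℝ → ℝ, MorseSet d N A

/-- A discrete geodesic ray: the sequence of vertices of a geodesic ray in a graph. -/
def IsGeodSeq (d : X → X → ℝ) (γ : ℕ → X) : Prop :=
  ∀ m n : ℕ, d (γ m) (γ n) = |(m : ℝ) - (n : ℝ)|

/-- A discrete geodesic segment of length `n`. -/
def IsGeodSeg (d : X → X → ℝ) (n : ℕ) (γ : ℕ → X) : Prop :=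
  ∀ i ≤ n, ∀ j ≤ n, d (γ i) (γ j) = |(i : ℝ) - (j : ℝ)|

/-- A discrete `C`-quasi-geodesic ray. -/
def IsQGSeq (d : X → X → ℝ) (C : ℝ) (γ : ℕ → X) : Prop :=
  1 ≤ C ∧ ∀ m n : ℕ,
    |(m : ℝ) - n| / C - C ≤ d (γ m) (γ n) ∧ d (γ m) (γ n) ≤ C * |(m : ℝ) - n| + C

/-- Two sets are at finite Hausdorff distance with respect to `d`. -/
def BddHD (d : X → X → ℝ) (A B : Set X) : Prop :=
  ∃ r : ℝ, (∀ a ∈ A, InNbhd d B r a) ∧ (∀ b ∈ B, InNbhd d A r b)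

/-- A discrete edge path with `n` steps: consecutive points are at distance at most `1`
(i.e. equal or joined by an edge, in a graph whose vertex set carries the metric `d`). -/
def IsEdgePath (d : X → X → ℝ) (n : ℕ) (c : ℕ → X) : Prop :=
  ∀ i < n, d (c i) (c (i + 1)) ≤ 1

/-- Combinatorial divergence of a discrete ray `γ` in a graph with vertex distance `d`:
the infimum, over `s ≥ r` and over edge paths joining `γ (s - r)` to `γ (s + r)` and
avoiding the ball of radius `ε·r` around `γ s`, of the length of the path. -/
noncomputable def gdivergence (d : X → X → ℝ) (γ : ℕ → X) (r : ℕ) (ε : ℝ) : ℝ≥0∞ :=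
  ⨅ (s : ℕ) (_ : r ≤ s) (n : ℕ) (c : ℕ → X) (_ : IsEdgePath d n c)
    (_ : c 0 = γ (s - r)) (_ : c n = γ (s + r))
    (_ : ∀ i ≤ n, ε * r < d (c i) (γ s)), (n : ℝ≥0∞)

/-! ## Geodesic metric spaces, geodesic rays, divergence -/

variable {Y : Type*} [MetricSpace Y]

/-- A geodesic metric space: any two points are joined by an isometrically parametrised path. -/
def IsGeodesicSpace (Y : Type*) [MetricSpace Y] : Prop :=
  ∀ x y : Y, ∃ γ : ℝ → Y, γ 0 = x ∧ γ (dist x y) = y ∧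
    ∀ s ∈ Set.Icc 0 (dist x y), ∀ t ∈ Set.Icc 0 (dist x y), dist (γ s) (γ t) = |s - t|

/-- A geodesic ray (defined on `[0,∞)` and extended constantly to negative times). -/
def IsGeodRay (γ : ℝ → Y) : Prop :=
  (∀ s t : ℝ, 0 ≤ s → 0 ≤ t → dist (γ s) (γ t) = |s - t|) ∧ ∀ t : ℝ, γ t = γ (max t 0)

theorem IsGeodRay.lipschitz {γ : ℝ → Y} (h : IsGeodRay γ) : LipschitzWith 1 γ := by
  apply LipschitzWith.of_dist_le_mul
  intro s t
  rw [h.2 s, h.2 t, h.1 _ _ (le_max_right s 0) (le_max_right t 0)]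
  rw [NNReal.coe_one, one_mul, Real.dist_eq]
  exact abs_max_sub_max_le_abs s t 0

/-- Divergence function `δ_γ(r, ε)` of a quasi-geodesic ray `γ` in a metric space:
the infimum of lengths (total variations) of paths connecting `γ (s - r)` to `γ (s + r)`
outside the closed ball `B(γ s, εr)`, over all `s ≥ r`. -/
noncomputable def divergence (γ : ℝ → Y) (r ε : ℝ) : ℝ≥0∞ :=
  ⨅ (s : ℝ) (_ : r ≤ s) (c : ℝ → Y) (_ : ContinuousOn c (Set.Icc 0 1))
    (_ : c 0 = γ (s - r)) (_ : c 1 = γ (s + r))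
    (_ : ∀ t ∈ Set.Icc (0 : ℝ) 1, ε * r < dist (c t) (γ s)),
    eVariationOn c (Set.Icc 0 1)

/-- Quasi-isometric embedding between sets carrying explicit distance functions. -/
def IsQIEmb {Z W : Type*} (dZ : Z → Z → ℝ) (dW : W → W → ℝ) (f : Z → W) : Prop :=
  ∃ C : ℝ, 1 ≤ C ∧ ∀ z z' : Z,
    dZ z z' / C - C ≤ dW (f z) (f z') ∧ dW (f z) (f z') ≤ C * dZ z z' + C

/-! ## The Morse boundary of a proper geodesic metric space -/

/-- A Morse geodesic ray based at `p` in the metric space `Y`. -/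
structure MRay (Y : Type*) [MetricSpace Y] (p : Y) where
  ray : ℝ → Y
  base : ray 0 = p
  geod : IsGeodRay ray
  morse : IsMorse dist (Set.range ray)

/-- Two rays are identified when they are at finite Hausdorff distance. -/
def mrayRel (p : Y) (x y : MRay Y p) : Prop :=
  BddHD dist (Set.range x.ray) (Set.range y.ray)

/-- The Morse boundary of a metric space, as a set: Morse geodesic rays based at `p`,
modulo finite Hausdorff distance. -/
def MorseBoundarySp (Y : Type*) [MetricSpace Y] (p : Y) : Type _ := Quot (mrayRel p)

/-- The `N`-Morse stratum: `N`-Morse geodesic rays based at `p`. -/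
def NRaysSp (Y : Type*) [MetricSpace Y] (p : Y) (N : ℝ → ℝ) : Type _ :=
  {γ : MRay Y p // MorseSet dist N (Set.range γ.ray)}

/-- Each stratum of rays carries the compact-open topology (as a set of continuous maps). -/
noncomputable instance NRaysSp.instTop (p : Y) (N : ℝ → ℝ) : TopologicalSpace (NRaysSp Y p N) :=
  TopologicalSpace.induced
    (fun γ => (⟨γ.1.ray, γ.1.geod.lipschitz.continuous⟩ : C(ℝ, Y))) inferInstance

/-- The Morse boundary carries the direct limit topology over all Morse gauges:
a set is open iff its intersection with each stratum `∂_M^N Y_p` is open there. -/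
noncomputable instance MorseBoundarySp.instTop (p : Y) :
    TopologicalSpace (MorseBoundarySp Y p) :=
  ⨆ N : ℝ → ℝ,
    TopologicalSpace.coinduced (fun γ : NRaysSp Y p N => Quot.mk (mrayRel p) γ.1) inferInstance

/-- The relative Morse boundary `(∂_M Y, f)` of a quasi-isometric embedding `f : Y → X`:
classes of Morse rays of `Y` whose image under `f` is Morse in `X`.  It is a subset of
`∂_M Y` (and carries the subspace topology). -/
def relBoundarySp {Y X : Type*} [MetricSpace Y] [MetricSpace X] (p : Y) (f : Y → X) :
    Set (MorseBoundarySp Y p) :=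
  {ξ | ∃ γ : MRay Y p, Quot.mk (mrayRel p) γ = ξ ∧ IsMorse dist (f '' Set.range γ.ray)}

/-! ## Word metrics and Morse boundaries of finitely generated groups -/

variable {G : Type*} [Group G]

/-- Word length of `g` with respect to the (symmetrised) alphabet `S`. -/
noncomputable def wordLength (S : Set G) (g : G) : ℕ :=
  sInf {n : ℕ | ∃ l : List G, l.length = n ∧ (∀ x ∈ l, x ∈ S ∨ x⁻¹ ∈ S) ∧ l.prod = g}

/-- Word metric on `G` with respect to `S`; this is the distance between vertices in the
Cayley graph `Cay(G, S)`. -/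
noncomputable def wdist (S : Set G) (g h : G) : ℝ := wordLength S (g⁻¹ * h)

/-- A Morse geodesic ray in the Cayley graph of `(G, S)`, based at the identity,
recorded by its sequence of vertices. -/
structure GRay (G : Type*) [Group G] (S : Set G) where
  seq : ℕ → G
  base : seq 0 = 1
  geod : IsGeodSeq (wdist S) seq
  morse : IsMorse (wdist S) (Set.range seq)

/-- Identification of rays at finite Hausdorff distance. -/
def grayRel (S : Set G) (x y : GRay G S) : Prop :=
  BddHD (wdist S) (Set.range x.seq) (Set.range y.seq)

/-- The Morse boundary `∂_M G` of the group `G` with finite generating set `S`. -/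
def MorseBoundary (G : Type*) [Group G] (S : Set G) : Type _ := Quot (grayRel (G := G) S)

/-- The stratum of `N`-Morse rays. -/
def NGRays (G : Type*) [Group G] (S : Set G) (N : ℝ → ℝ) : Type _ :=
  {γ : GRay G S // MorseSet (wdist S) N (Set.range γ.seq)}

/-- The compact-open topology on a stratum: for rays in a graph (vertex sequences) this is
the topology of pointwise convergence of the vertex sequences, `G` being discrete. -/
noncomputable instance NGRays.instTop (S : Set G) (N : ℝ → ℝ) :
    TopologicalSpace (NGRays G S N) :=
  TopologicalSpace.induced (fun γ => γ.1.seq)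
    (@Pi.topologicalSpace ℕ (fun _ => G) (fun _ => ⊥))

/-- The direct limit topology on the Morse boundary of a group. -/
noncomputable instance MorseBoundary.instTop (S : Set G) :
    TopologicalSpace (MorseBoundary G S) :=
  ⨆ N : ℝ → ℝ,
    TopologicalSpace.coinduced (fun γ : NGRays G S N => Quot.mk (grayRel S) γ.1) inferInstance

/-! ## Subgroups: undistortion, relative Morse boundaries -/

/-- `H` is finitely generated and undistorted in `(G, S)`: it has a finite generating set
whose word metric is bi-Lipschitz equivalent (suitably, quasi-isometric) to the metric
induced from `G`. -/
def FGUndistorted (S : Set G) (H : Subgroup G) : Prop :=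
  ∃ T : Finset H, Subgroup.closure (T : Set H) = ⊤ ∧
    ∃ C : ℝ, 1 ≤ C ∧ ∀ h h' : H,
      wdist (T : Set H) h h' ≤ C * wdist S (h : G) (h' : G) + C ∧
      wdist S (h : G) (h' : G) ≤ C * wdist (T : Set H) h h' + C

/-- The relative Morse boundary of `H` in `G` is empty, `(∂_M H, G) = ∅`:
no Morse geodesic ray of `H` (w.r.t. any finite generating set of `H`) remains Morse in `G`. -/
def RelMorseEmpty (S : Set G) (H : Subgroup G) : Prop :=
  ∀ T : Finset H, Subgroup.closure (T : Set H) = ⊤ →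
    ∀ γ : ℕ → H, IsGeodSeq (wdist (T : Set H)) γ →
      IsMorse (wdist (T : Set H)) (Set.range γ) →
      ¬ IsMorse (wdist S) (Set.range fun n => (γ n : G))

/-- The image of the natural injection `(∂_M H, G) ↪ ∂_M G`: those classes in `∂_M G`
having a representative ray staying at bounded distance from `H`. -/
def relBdryImage (S : Set G) (H : Subgroup G) : Set (MorseBoundary G S) :=
  {ξ | ∃ γ : GRay G S, Quot.mk (grayRel S) γ = ξ ∧
        ∃ r : ℝ, ∀ n : ℕ, ∃ h ∈ H, wdist S (γ.seq n) h ≤ r}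

/-- The relative Morse boundary `(∂_M H, G)` as a subset of `∂_M H` (where `∂_M H` is
formed w.r.t. a generating set `T` of `H`): classes of rays that remain Morse in `G`. -/
def relBdryIn (S : Set G) (H : Subgroup G) (T : Set H) : Set (MorseBoundary H T) :=
  {ξ | ∃ γ : GRay H T, Quot.mk (grayRel T) γ = ξ ∧
        IsMorse (wdist S) (Set.range fun n => (γ.seq n : G))}

/-- Specification of the natural map `∂_M H → ∂_M G` (or of its restriction to the relative
boundary): each class is sent to the class of a ray of `G` at finite Hausdorff distance
from the image of (a representative of) the given class. -/
def InclSpec (S : Set G) (H : Subgroup G) (TH : Set H)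
    (F : MorseBoundary H TH → MorseBoundary G S) : Prop :=
  ∀ γ : GRay H TH, ∀ β : GRay G S,
    Quot.mk (grayRel S) β = F (Quot.mk (grayRel TH) γ) →
    BddHD (wdist S) (Set.range fun n => ((γ.seq n : G))) (Set.range β.seq)

/-! ## Asymptotic cones and relatively wide subgroups -/

/-- Admissible sequences for an asymptotic cone: sequences at bounded rescaled distance
from the basepoints `o`. -/
def conePts (ω : Ultrafilter ℕ) (d : X → X → ℝ) (o : ℕ → X) (s : ℕ → ℝ) : Set (ℕ → X) :=
  {x | ∃ B : ℝ, ∀ᶠ n in (ω : Filter ℕ), d (o n) (x n) ≤ B * s n}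

/-- The pseudo-distance of the asymptotic cone: ultralimit of the rescaled distances. -/
noncomputable def coneDist (ω : Ultrafilter ℕ) (d : X → X → ℝ) (s : ℕ → ℝ)
    (x y : ℕ → X) : ℝ :=
  limUnder (ω : Filter ℕ) (fun n => d (x n) (y n) / s n)

/-- The topology of the asymptotic cone, as a topology on representative sequences:
generated by the open balls of the cone pseudo-distance. -/
noncomputable def coneTop (ω : Ultrafilter ℕ) (d : X → X → ℝ) (o : ℕ → X) (s : ℕ → ℝ) :
    TopologicalSpace (ℕ → X) :=
  TopologicalSpace.generateFrom
    {U | ∃ c ∈ conePts ω d o s, ∃ ε : ℝ, 0 < ε ∧ U = {x | coneDist ω d s c x < ε}}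

/-- `z` is a cut point of the asymptotic cone separating the points `x` and `y`:
`x, y` differ from `z` and do not lie in a common connected subset of the complement
of (the point represented by) `z`. -/
def ConeSeparates (ω : Ultrafilter ℕ) (d : X → X → ℝ) (o : ℕ → X) (s : ℕ → ℝ)
    (x y z : ℕ → X) : Prop :=
  coneDist ω d s x z ≠ 0 ∧ coneDist ω d s y z ≠ 0 ∧
  ¬ ∃ A : Set (ℕ → X),
      A ⊆ {w ∈ conePts ω d o s | coneDist ω d s w z ≠ 0} ∧ x ∈ A ∧ y ∈ A ∧
      @IsPreconnected (ℕ → X) (coneTop ω d o s) A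

/-- `H` is relatively wide in `(G, S)`: in every asymptotic cone of `G` (over a
non-principal ultrafilter, arbitrary basepoints and scaling factors tending to infinity),
no two limit points of `H` are separated by a cut point. -/
def RelativelyWide (S : Set G) (H : Subgroup G) : Prop :=
  ∀ ω : Ultrafilter ℕ, (ω : Filter ℕ) ≤ Filter.cofinite →
  ∀ (o : ℕ → G) (s : ℕ → ℝ), (∀ n, 0 < s n) → Tendsto s atTop atTop →
  ∀ x y z : ℕ → G, (∀ n, x n ∈ H) → (∀ n, y n ∈ H) →
    x ∈ conePts ω (wdist S) o s → y ∈ conePts ω (wdist S) o s →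
    z ∈ conePts ω (wdist S) o s →
    ¬ ConeSeparates ω (wdist S) o s x y z

/-- The subgroup `H ≤ V` is relatively wide in `V` (for any, equivalently some, finite
generating set of `V`). -/
def RelWideIn (V H : Subgroup G) : Prop :=
  ∀ SV : Finset V, Subgroup.closure (SV : Set V) = ⊤ →
    RelativelyWide (SV : Set V) (H.subgroupOf V)

/-! ## Actions on simplicial trees -/

variable {VT : Type*}

/-- `G` splits as a graph of groups: it acts on the simplicial tree `T`
(preserving adjacency), minimally, non-elliptically and without inversions. -/
def ActsOnTree (G : Type*) [Group G] {VT : Type*} (T : SimpleGraph VT) [MulAction G VT] :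
    Prop :=
  T.IsTree ∧
  (∀ (g : G) (a b : VT), T.Adj a b → T.Adj (g • a) (g • b)) ∧
  (∀ (g : G) (a b : VT), T.Adj a b → ¬(g • a = b ∧ g • b = a)) ∧
  (¬ ∃ v : VT, ∀ g : G, g • v = v) ∧
  (∀ W : Set VT, W.Nonempty → (∀ (g : G), ∀ v ∈ W, g • v ∈ W) →
    (∀ a ∈ W, ∀ b ∈ W, ∀ c : VT, T.dist a c + T.dist c b = T.dist a b → c ∈ W) →
    W = Set.univ)

/-- The stabiliser of the edge `{a, b}` (pointwise; for actions without inversions this is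
the full edge stabiliser). -/
def edgeStab (G : Type*) [Group G] {VT : Type*} [MulAction G VT] (a b : VT) : Subgroup G :=
  MulAction.stabilizer G a ⊓ MulAction.stabilizer G b

/-- The halfspace determined by the edge `{a, b}` containing `b`: one of the two connected
components of the complement of the open edge. -/
def halfspace {VT : Type*} (T : SimpleGraph VT) (a b : VT) : Set VT :=
  {v | T.dist v b < T.dist v a}

end MorseGoG

namespace MorseGoG

variable {G : Type*} [Group G] {VT : Type*}

/-- A choice of "edge subgraphs" `Γ(𝔢) ⊆ Γ` of the Cayley graph `Γ = Cay(G, S)`, one for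
each (unoriented) edge of the tree `T`, recorded by its vertex set `A a b ⊆ G`,
satisfying the properties of Lemma 3.2 (`AIS lem`).  Here `p` is the fixed base vertex of
`T` and `f_p(g) = g • p` is the orbit map. -/
structure EdgeSubgraphs (G : Type*) [Group G] (S : Set G) {VT : Type*} (T : SimpleGraph VT)
    [MulAction G VT] (p : VT) where
  /-- the vertex set of `Γ(𝔢)` for the edge `𝔢 = {a, b}` -/
  A : VT → VT → Set G
  /-- `Γ(𝔢)` only depends on the unoriented edge -/
  symm : ∀ a b : VT, A a b = A b a
  /-- (1) `Γ(𝔢)` is connected -/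
  conn : ∀ a b : VT, T.Adj a b → ∀ x ∈ A a b, ∀ y ∈ A a b,
    ∃ (n : ℕ) (c : ℕ → G), IsEdgePath (wdist S) n c ∧ c 0 = x ∧ c n = y ∧
      ∀ i ≤ n, c i ∈ A a b
  /-- (1) `Γ(𝔢)` is `G_𝔢`-invariant -/
  inva : ∀ a b : VT, T.Adj a b → ∀ g ∈ edgeStab G a b, ∀ x ∈ A a b, g * x ∈ A a b
  /-- (1) `Γ(𝔢)` is `G_𝔢`-cocompact -/
  cocpt : ∀ a b : VT, T.Adj a b →
    ∃ F : Finset G, ∀ x ∈ A a b, ∃ g ∈ edgeStab G a b, ∃ f ∈ F, x = g * f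
  /-- (2) equivariance: `Γ(g𝔢) = gΓ(𝔢)` -/
  equivariant : ∀ (g : G) (a b : VT), A (g • a) (g • b) = (fun x => g * x) '' A a b
  /-- (3) `Γ(𝔢)` contains every edge of `Γ` with one endpoint in `f_p⁻¹(𝔥)` and the other
  in `f_p⁻¹(𝔥*)` -/
  crossing : ∀ a b : VT, T.Adj a b → ∀ x y : G, wdist S x y = 1 →
    x • p ∈ halfspace T a b → y • p ∈ halfspace T b a → x ∈ A a b ∧ y ∈ A a b
  /-- (4) `N(f_p⁻¹(𝔥), r) ∩ N(f_p⁻¹(𝔥*), r) ⊆ N(Γ(𝔢), r)` -/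
  nbhd : ∀ a b : VT, T.Adj a b → ∀ r : ℝ, 0 ≤ r → ∀ x : G,
    (∃ y : G, y • p ∈ halfspace T a b ∧ wdist S x y ≤ r) →
    (∃ y : G, y • p ∈ halfspace T b a ∧ wdist S x y ≤ r) →
    ∃ z ∈ A a b, wdist S x z ≤ r
  /-- (5) each edge of `Γ` lies in `Γ(𝔢)` for only finitely many edges `𝔢` of `T` -/
  finmany : ∀ x y : G, wdist S x y = 1 →
    {e : VT × VT | T.Adj e.1 e.2 ∧ x ∈ A e.1 e.2 ∧ y ∈ A e.1 e.2}.Finite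

/-- The vertex set of `Γ(𝔥)` for the halfspace `𝔥` of the edge `{a,b}` containing `b`:
`f_p⁻¹(𝔥) ∖ Γ(𝔢)`. -/
def hsVerts (T : SimpleGraph VT) [MulAction G VT] (p : VT)
    (A : VT → VT → Set G) (a b : VT) : Set G :=
  {g : G | g • p ∈ halfspace T a b ∧ g ∉ A a b}

/-- `M(𝔥) ⊆ ∂_M G`: classes of rays eventually contained in `Γ(𝔥)`, for the halfspace `𝔥`
of the edge `{a,b}` containing `b`. -/
def Mset (S : Set G) (T : SimpleGraph VT) [MulAction G VT] (p : VT)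
    (A : VT → VT → Set G) (a b : VT) : Set (MorseBoundary G S) :=
  {ξ | ∃ γ : GRay G S, Quot.mk (grayRel S) γ = ξ ∧
        ∃ n₀ : ℕ, ∀ n ≥ n₀, γ.seq n ∈ hsVerts T p A a b}

end MorseGoG

namespace MorseGoG

/-! ### Word metrics -/

section Word

variable {Γ : Type*} [Group Γ] {S : Set Γ}

theorem wordLength_le_of_list (l : List Γ) (hl : ∀ x ∈ l, x ∈ S ∨ x⁻¹ ∈ S) :
    wordLength S l.prod ≤ l.length :=
  Nat.sInf_le ⟨l, rfl, hl, rfl⟩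

theorem exists_list_wordLength (hS : Subgroup.closure S = ⊤) (g : Γ) :
    ∃ l : List Γ, l.length = wordLength S g ∧ (∀ x ∈ l, x ∈ S ∨ x⁻¹ ∈ S) ∧ l.prod = g := by
  have hg : g ∈ (Subgroup.closure S).toSubmonoid := by rw [hS]; trivial
  rw [Subgroup.closure_toSubmonoid] at hg
  obtain ⟨l, hl, hp⟩ := Submonoid.exists_list_of_mem_closure hg
  exact Nat.sInf_mem (s := {n : ℕ | ∃ l : List Γ, l.length = n ∧
    (∀ x ∈ l, x ∈ S ∨ x⁻¹ ∈ S) ∧ l.prod = g}) ⟨l.length, l, rfl, hl, hp⟩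

theorem wordLength_one : wordLength S (1 : Γ) = 0 := by
  have := wordLength_le_of_list (S := S) ([] : List Γ) (by simp)
  simpa using this

theorem wordLength_mul_le (hS : Subgroup.closure S = ⊤) (g h : Γ) :
    wordLength S (g * h) ≤ wordLength S g + wordLength S h := by
  obtain ⟨l, h1, h2, h3⟩ := exists_list_wordLength hS g
  obtain ⟨l', h1', h2', h3'⟩ := exists_list_wordLength hS h
  have := wordLength_le_of_list (S := S) (l ++ l') (by
    intro x hx
    rcases List.mem_append.1 hx with hx | hx
    exacts [h2 x hx, h2' x hx])
  simpa [h1, h1', h3, h3'] using this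

theorem wordLength_inv_le (hS : Subgroup.closure S = ⊤) (g : Γ) :
    wordLength S g⁻¹ ≤ wordLength S g := by
  obtain ⟨l, h1, h2, h3⟩ := exists_list_wordLength hS g
  have := wordLength_le_of_list (S := S) (l.map (·⁻¹)).reverse (by
    intro x hx
    simp only [List.mem_reverse, List.mem_map] at hx
    obtain ⟨y, hy, rfl⟩ := hx
    rcases h2 y hy with h | h
    · right; simpa using h
    · left; exact h)
  rw [← List.prod_inv_reverse, h3] at this
  simpa [h1] using this

theorem wordLength_inv (hS : Subgroup.closure S = ⊤) (g : Γ) :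
    wordLength S g⁻¹ = wordLength S g :=
  le_antisymm (wordLength_inv_le hS g) (by simpa using wordLength_inv_le hS g⁻¹)

theorem finite_wordBall (S : Finset Γ) (hS : Subgroup.closure (S : Set Γ) = ⊤) (n : ℕ) :
    {g : Γ | wordLength (S : Set Γ) g ≤ n}.Finite := by
  have key : ∀ n : ℕ, {g : Γ | ∃ l : List Γ, l.length = n ∧
      (∀ x ∈ l, x ∈ (S : Set Γ) ∨ x⁻¹ ∈ (S : Set Γ)) ∧ l.prod = g}.Finite := by
    intro n
    induction n with
    | zero =>
      refine (Set.finite_singleton (1 : Γ)).subset ?_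
      rintro g ⟨l, hl, -, rfl⟩
      simp [List.length_eq_zero_iff.1 hl]
    | succ n ih =>
      have hfin : ({x : Γ | x ∈ (S : Set Γ) ∨ x⁻¹ ∈ (S : Set Γ)}).Finite := by
        refine (S.finite_toSet.union (S.finite_toSet.image (·⁻¹))).subset ?_
        rintro x (hx | hx)
        · exact Or.inl hx
        · exact Or.inr ⟨x⁻¹, hx, by simp⟩
      refine (Set.Finite.image2 (fun a b => a * b) hfin ih).subset ?_
      rintro g ⟨l, hl, hl', rfl⟩
      match l, hl, hl' with
      | a :: l, hl, hl' =>
        refine ⟨a, hl' a (by simp), l.prod, ⟨l, by simpa using hl,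
          fun x hx => hl' x (by simp [hx]), rfl⟩, by simp⟩
  refine ((Set.finite_Iic n).biUnion (fun k _ => key k)).subset ?_
  intro g hg
  obtain ⟨l, h1, h2, h3⟩ := exists_list_wordLength hS g
  simp only [Set.mem_iUnion]
  exact ⟨wordLength (S : Set Γ) g, hg, l, h1, h2, h3⟩

theorem wdist_nonneg (x y : Γ) : 0 ≤ wdist S x y := by simp [wdist]

theorem wdist_self (x : Γ) : wdist S x x = 0 := by simp [wdist, wordLength_one]

theorem wdist_comm (hS : Subgroup.closure S = ⊤) (x y : Γ) : wdist S x y = wdist S y x := by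
  have := wordLength_inv hS (x⁻¹ * y)
  rw [mul_inv_rev, inv_inv] at this
  simp [wdist, this]

theorem wdist_triangle (hS : Subgroup.closure S = ⊤) (x y z : Γ) :
    wdist S x z ≤ wdist S x y + wdist S y z := by
  have := wordLength_mul_le hS (x⁻¹ * y) (y⁻¹ * z)
  rw [show x⁻¹ * y * (y⁻¹ * z) = x⁻¹ * z by group] at this
  simp only [wdist]
  exact_mod_cast this

theorem wdist_mul_left (g x y : Γ) : wdist S (g * x) (g * y) = wdist S x y := by
  simp only [wdist]
  congr 2
  group

/-- The consequences of the triangle inequality in the form in which they are used below. -/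
theorem wdist_tri' (hS : Subgroup.closure S = ⊤) (x y z : Γ) :
    wdist S x z ≤ wdist S y x + wdist S y z := by
  rw [wdist_comm hS y x]; exact wdist_triangle hS x y z

end Word

/-! ### Weighted paths -/

/-- `Pth adj w m x y`: there is a finite path from `x` to `y` with consecutive vertices related
by `adj`, and `m` is the sum of the weights `w` of its vertices other than the initial one. -/
inductive Pth {X : Type*} (adj : X → X → Prop) (w : X → ℕ) : ℕ → X → X → Prop
  | nil (x : X) : Pth adj w 0 x x
  | snoc {m : ℕ} {x y z : X} (h : Pth adj w m x y) (h' : adj y z) : Pth adj w (m + w z) x z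

section Path

variable {X : Type*} {adj adj' : X → X → Prop} {w w' : X → ℕ}

theorem Pth.trans {m k : ℕ} {x y z : X} (h : Pth adj w m x y) (h' : Pth adj w k y z) :
    Pth adj w (m + k) x z := by
  induction h' with
  | nil => exact h
  | snoc _ h2 ih => rw [← add_assoc]; exact (ih h).snoc h2

theorem Pth.mono {m : ℕ} {x y : X} (h : Pth adj w m x y)
    (ha : ∀ y z, adj y z → adj' y z ∧ w' z = w z) : Pth adj' w' m x y := by
  induction h with
  | nil => exact .nil _
  | snoc _ h2 ih => rw [← (ha _ _ h2).2]; exact ih.snoc (ha _ _ h2).1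

/-- A path as a sequence `c` of vertices, with `f` the cumulated weight. -/
theorem Pth.exists_seq {m : ℕ} {x y : X} (h : Pth adj w m x y) :
    ∃ (n : ℕ) (c : ℕ → X) (f : ℕ → ℕ), c 0 = x ∧ c n = y ∧ f 0 = 0 ∧ f n = m ∧
      ∀ i < n, adj (c i) (c (i + 1)) ∧ f (i + 1) = f i + w (c (i + 1)) := by
  induction h with
  | nil x => exact ⟨0, fun _ => x, fun _ => 0, rfl, rfl, rfl, rfl, by simp⟩
  | @snoc m x y z _ h2 ih =>
    obtain ⟨n, c, f, h0, hn, hf0, hfn, hc⟩ := ih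
    refine ⟨n + 1, fun i => if i ≤ n then c i else z, fun i => if i ≤ n then f i else m + w z,
      by simpa using h0, by simp, by simpa using hf0, by simp, ?_⟩
    intro i hi
    rcases Nat.lt_succ_iff_lt_or_eq.1 hi with hi | rfl
    · have h1 : i + 1 ≤ n := hi
      simp only [hi.le, h1, if_true]
      exact hc i hi
    · simp [hn, h2, hfn]

theorem Pth.of_seq {n : ℕ} {c : ℕ → X} {f : ℕ → ℕ}
    (hc : ∀ i < n, adj (c i) (c (i + 1)) ∧ f (i + 1) = f i + w (c (i + 1)))
    {i j : ℕ} (hij : i ≤ j) (hj : j ≤ n) :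
    ∃ k, f j = f i + k ∧ Pth adj w k (c i) (c j) := by
  induction j, hij using Nat.le_induction with
  | base => exact ⟨0, rfl, .nil _⟩
  | succ j hij ih =>
    obtain ⟨k, hk, hp⟩ := ih (by omega)
    obtain ⟨h1, h2⟩ := hc j (by omega)
    exact ⟨k + w (c (j + 1)), by omega, hp.snoc h1⟩

end Path

section Conn

variable {Γ : Type*} [Group Γ] {S : Set Γ}

/-- `Conn S A m x y`: in the Cayley graph of `(Γ, S)` there is an edge path with `m` steps from
`x` to `y`, all of whose vertices, except possibly `x`, lie in `A`. -/
def Conn (S A : Set Γ) (m : ℕ) (x y : Γ) : Prop :=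
  Pth (fun y z => wdist S y z ≤ 1 ∧ z ∈ A) (fun _ => 1) m x y

theorem Conn.mono {A B : Set Γ} (hAB : A ⊆ B) {m : ℕ} {x y : Γ} (h : Conn S A m x y) :
    Conn S B m x y :=
  Pth.mono h fun _ _ h => ⟨⟨h.1, hAB h.2⟩, rfl⟩

theorem Conn.trans {A : Set Γ} {m k : ℕ} {x y z : Γ} (h : Conn S A m x y)
    (h' : Conn S A k y z) : Conn S A (m + k) x z :=
  Pth.trans h h'

theorem Conn.translate {A B : Set Γ} (g : Γ) (hAB : ∀ a ∈ A, g * a ∈ B) {m : ℕ} {x y : Γ}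
    (h : Conn S A m x y) : Conn S B m (g * x) (g * y) := by
  unfold Conn at h
  induction h with
  | nil => exact .nil _
  | snoc _ h2 ih => exact .snoc ih ⟨by rw [wdist_mul_left]; exact h2.1, hAB _ h2.2⟩

theorem Conn.wdist_le (hS : Subgroup.closure S = ⊤) {A : Set Γ} {m : ℕ} {x y : Γ}
    (h : Conn S A m x y) : wdist S x y ≤ m := by
  unfold Conn at h
  induction h with
  | nil => simp [wdist_self]
  | @snoc m x y z _ h2 ih =>
    have := wdist_triangle hS x y z
    push_cast
    linarith [h2.1]

theorem Conn.exists_seq {A : Set Γ} {m : ℕ} {x y : Γ} (h : Conn S A m x y) :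
    ∃ c : ℕ → Γ, c 0 = x ∧ c m = y ∧ ∀ i < m, wdist S (c i) (c (i + 1)) ≤ 1 ∧ c (i + 1) ∈ A := by
  obtain ⟨n, c, f, h0, hn, hf0, hfn, hc⟩ := Pth.exists_seq h
  have hf : ∀ i ≤ n, f i = i := by
    intro i hi
    induction i with
    | zero => exact hf0
    | succ i ih => rw [(hc i (by omega)).2, ih (by omega)]
  have hnm : n = m := by rw [← hfn, hf n le_rfl]
  subst hnm
  exact ⟨c, h0, hn, fun i hi => (hc i hi).1⟩

/-- A geodesic from `x` to `y`, its vertices being no further from `x` and `y` than `y` is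
from `x`. -/
theorem conn_geod (hS : Subgroup.closure S = ⊤) {A : Set Γ} (x y : Γ)
    (hA : ∀ w, wdist S x w ≤ wdist S x y → wdist S w y ≤ wdist S x y → w ∈ A) :
    ∃ m : ℕ, (m : ℝ) = wdist S x y ∧ Conn S A m x y := by
  obtain ⟨l, h1, h2, h3⟩ := exists_list_wordLength hS (x⁻¹ * y)
  have key : ∀ l : List Γ, (∀ a ∈ l, a ∈ S ∨ a⁻¹ ∈ S) →
      (∀ l1 l2, l = l1 ++ l2 → x * l1.prod ∈ A) → Conn S A l.length x (x * l.prod) := by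
    intro l
    induction l using List.reverseRecOn with
    | nil => intro _ _; simpa [Conn] using Pth.nil x
    | append_singleton l a ih =>
      intro hl hA
      have := ih (fun b hb => hl b (by simp [hb])) (fun l1 l2 h => hA l1 (l2 ++ [a]) (by simp [h]))
      rw [List.length_append]
      refine Pth.snoc this ⟨?_, hA (l ++ [a]) [] (by simp)⟩
      have h1 := wordLength_le_of_list (S := S) [a] (by
        intro b hb; exact hl b (by simp at hb; simp [hb]))
      rw [List.prod_append, wdist_mul_left]
      simp only [wdist, List.prod_singleton, List.length_singleton, inv_mul_cancel_left] at h1 ⊢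
      exact_mod_cast h1
  have hlen : (l.length : ℝ) = wdist S x y := by rw [h1]; rfl
  refine ⟨l.length, hlen, ?_⟩
  have := key l h2 (by
    rintro l1 l2 rfl
    have e1 := wordLength_le_of_list (S := S) l1 (fun a ha => h2 a (by simp [ha]))
    have e2 := wordLength_le_of_list (S := S) l2 (fun a ha => h2 a (by simp [ha]))
    rw [List.length_append, Nat.cast_add] at hlen
    apply hA
    · have : wdist S x (x * l1.prod) = wordLength S l1.prod := by simp [wdist]
      rw [this, ← hlen]
      have : (wordLength S l1.prod : ℝ) ≤ l1.length := by exact_mod_cast e1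
      linarith [(Nat.cast_nonneg l2.length : (0 : ℝ) ≤ _)]
    · have : wdist S (x * l1.prod) y = wordLength S l2.prod := by
        rw [List.prod_append] at h3
        have : y = x * (l1.prod * l2.prod) := by rw [h3]; group
        rw [this]; simp only [wdist]; congr 2; group
      rw [this, ← hlen]
      have : (wordLength S l2.prod : ℝ) ≤ l2.length := by exact_mod_cast e2
      linarith [(Nat.cast_nonneg l1.length : (0 : ℝ) ≤ _)])
  rwa [h3, mul_inv_cancel_left] at this

end Conn

/-! ### Relative wideness at finite scale -/

section Wide

variable {Γ : Type*} [Group Γ] {S : Set Γ}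

theorem tendsto_coneDist (hS : Subgroup.closure S = ⊤) {ω : Ultrafilter ℕ} {o : ℕ → Γ}
    {s : ℕ → ℝ} (hs : ∀ n, 0 < s n) {x y : ℕ → Γ}
    (hx : x ∈ conePts ω (wdist S) o s) (hy : y ∈ conePts ω (wdist S) o s) :
    Tendsto (fun n => wdist S (x n) (y n) / s n) ω (𝓝 (coneDist ω (wdist S) s x y)) := by
  obtain ⟨B, hB⟩ := hx
  obtain ⟨B', hB'⟩ := hy
  apply tendsto_nhds_limUnder
  have hmem : ∀ᶠ n in (ω : Filter ℕ), wdist S (x n) (y n) / s n ∈ Set.Icc 0 (B + B') := by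
    filter_upwards [hB, hB'] with n h1 h2
    refine ⟨div_nonneg (wdist_nonneg _ _) (hs n).le, ?_⟩
    rw [div_le_iff₀ (hs n)]
    linarith [wdist_tri' hS (x n) (o n) (y n)]
  obtain ⟨a, -, ha⟩ := (isCompact_Icc (a := (0 : ℝ)) (b := B + B')).ultrafilter_le_nhds
    (ω.map fun n => wdist S (x n) (y n) / s n) (by
      rw [Ultrafilter.coe_map, le_principal_iff, mem_map]; exact hmem)
  exact ⟨a, ha⟩

/-- Two points of `H` which are far from `z` on the scale `r` can be joined by a path of length
linear in `r` avoiding a ball of radius linear in `r` around `z`.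

If the constants `n + 1` failed at scales `r n → ∞`, the limits of the endpoints in the
asymptotic cone with scaling factors `r n` would be distinct from the limit of `z`, hence would
lie in a connected subset `A` of its complement.  Being joined to the first endpoint by paths
with the required properties is an open and closed condition on the points of `A`. -/
theorem wide_finite_scale (hS : Subgroup.closure S = ⊤) {H : Subgroup Γ}
    (hw : RelativelyWide S H) {ε : ℝ} (hε : 0 < ε) :
    ∃ k : ℕ, 0 < k ∧ ∀ r : ℝ, (k : ℝ) ≤ r → ∀ x ∈ H, ∀ y ∈ H, ∀ z : Γ,
      wdist S x y ≤ r → ε * r ≤ wdist S x z → ε * r ≤ wdist S y z →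
      ∃ m : ℕ, (m : ℝ) ≤ k * r ∧ Conn S {w | r / k < wdist S w z} m x y := by
  by_contra hcon
  push Not at hcon
  have hcon' : ∀ n : ℕ, ∃ r : ℝ, ((n + 1 : ℕ) : ℝ) ≤ r ∧ ∃ x ∈ H, ∃ y ∈ H, ∃ z : Γ,
      wdist S x y ≤ r ∧ ε * r ≤ wdist S x z ∧ ε * r ≤ wdist S y z ∧
      ∀ m : ℕ, (m : ℝ) ≤ (n + 1 : ℕ) * r →
        ¬ Conn S {w | r / (n + 1 : ℕ) < wdist S w z} m x y :=
    fun n => hcon (n + 1) n.succ_pos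
  choose r hr x hx y hy z hxy hxz hyz hno using hcon'
  have hr1 : ∀ n : ℕ, (1 : ℝ) ≤ r n := by
    intro n
    have := hr n
    push_cast at this
    linarith [(Nat.cast_nonneg n : (0 : ℝ) ≤ n)]
  have hrpos : ∀ n, 0 < r n := fun n => by linarith [hr1 n]
  have hrtop : Tendsto r atTop atTop := by
    refine tendsto_atTop_mono (fun n => ?_) tendsto_natCast_atTop_atTop
    have := hr n
    push_cast at this
    linarith
  -- a geodesic from `x n` to `y n` shows that `z n` is not far away
  have hxz2 : ∀ n, wdist S (x n) (z n) ≤ 2 * r n := by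
    intro n
    by_contra hlt
    push Not at hlt
    have hk : (1 : ℝ) ≤ (n + 1 : ℕ) := by push_cast; linarith [(Nat.cast_nonneg n : (0 : ℝ) ≤ n)]
    obtain ⟨m, hm, hc⟩ := conn_geod hS (A := {w | r n / (n + 1 : ℕ) < wdist S w (z n)})
      (x n) (y n) (by
        intro w hw _
        have h1 : r n / (n + 1 : ℕ) ≤ r n := div_le_self (hrpos n).le hk
        have := wdist_triangle hS (x n) w (z n)
        simp only [Set.mem_ofPred_eq]
        linarith [hxy n])
    refine hno n m ?_ hc
    rw [hm]
    nlinarith [hxy n, hrpos n]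
  set ω : Ultrafilter ℕ := hyperfilter ℕ with hω
  have hωle : (ω : Filter ℕ) ≤ Filter.cofinite := hyperfilter_le_cofinite
  have hxc : x ∈ conePts ω (wdist S) x r :=
    ⟨1, Eventually.of_forall fun n => by rw [wdist_self]; linarith [hrpos n]⟩
  have hyc : y ∈ conePts ω (wdist S) x r :=
    ⟨1, Eventually.of_forall fun n => by linarith [hxy n]⟩
  have hzc : z ∈ conePts ω (wdist S) x r := ⟨2, Eventually.of_forall hxz2⟩
  have hpos : ∀ u ∈ conePts ω (wdist S) x r, 0 ≤ coneDist ω (wdist S) r u z := fun u hu =>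
    ge_of_tendsto' (tendsto_coneDist hS hrpos hu hzc)
      fun n => div_nonneg (wdist_nonneg _ _) (hrpos n).le
  have hne : ∀ u ∈ conePts ω (wdist S) x r, (∀ n, ε * r n ≤ wdist S (u n) (z n)) →
      coneDist ω (wdist S) r u z ≠ 0 := by
    intro u hu h
    have : ε ≤ coneDist ω (wdist S) r u z :=
      ge_of_tendsto' (tendsto_coneDist hS hrpos hu hzc)
        fun n => by rw [le_div_iff₀ (hrpos n)]; exact h n
    linarith
  have hsep := hw ω hωle x r hrpos hrtop x y z hx hy hxc hyc hzc
  simp only [ConeSeparates, not_and, not_not] at hsep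
  obtain ⟨A, hA, hxA, hyA, hpre⟩ := hsep (hne x hxc hxz) (hne y hyc hyz)
  -- points reached from `x` by paths of linear length avoiding a ball of linear radius
  let U : Set (ℕ → Γ) := {u | ∃ k : ℕ, 0 < k ∧ ∀ᶠ n in (ω : Filter ℕ), ∃ m : ℕ,
    (m : ℝ) ≤ k * r n ∧ Conn S {v | r n / k < wdist S v (z n)} m (x n) (u n)}
  have hxU : x ∈ U :=
    ⟨1, one_pos, Eventually.of_forall fun n => ⟨0, by simpa using (hrpos n).le, .nil _⟩⟩
  -- two nearby points far from `z` are joined by geodesics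
  have hstep : ∀ u ∈ U, ∀ v : ℕ → Γ, ∀ t : ℝ, 0 < t →
      (∀ᶠ n in (ω : Filter ℕ), wdist S (u n) (v n) < t * r n ∧
        2 * t * r n < wdist S (u n) (z n)) → v ∈ U := by
    rintro u ⟨k, hk, hu⟩ v t ht huv
    obtain ⟨q, hq⟩ := exists_nat_gt (max (1 / t) t)
    have hq1 : 1 / t < q := (le_max_left _ _).trans_lt hq
    have hq2 : t < q := (le_max_right _ _).trans_lt hq
    have hqpos : (0 : ℝ) < q := ht.trans hq2
    have hkpos : (0 : ℝ) < k := by exact_mod_cast hk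
    refine ⟨k + q, by omega, ?_⟩
    filter_upwards [hu, huv] with n ⟨m, hm, hc⟩ ⟨h1, h2⟩
    have hrn := hrpos n
    obtain ⟨m', hm', hc'⟩ := conn_geod hS
      (A := {v | r n / (k + q : ℕ) < wdist S v (z n)}) (u n) (v n) (by
        intro w hw _
        have h3 : r n / (k + q : ℕ) ≤ t * r n := by
          rw [div_le_iff₀ (by positivity)]
          push_cast
          rw [div_lt_iff₀ ht] at hq1
          nlinarith [mul_pos ht hkpos]
        have := wdist_triangle hS (u n) w (z n)
        simp only [Set.mem_ofPred_eq]
        linarith)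
    refine ⟨m + m', ?_, (hc.mono ?_).trans hc'⟩
    · push_cast
      nlinarith
    · intro w hw
      simp only [Set.mem_ofPred_eq] at hw ⊢
      refine lt_of_le_of_lt ?_ hw
      push_cast
      gcongr
      linarith
  let ball : (ℕ → Γ) → Set (ℕ → Γ) := fun u =>
    {v | coneDist ω (wdist S) r u v < coneDist ω (wdist S) r u z / 8}
  have hdpos : ∀ u ∈ A, 0 < coneDist ω (wdist S) r u z := fun u hu =>
    lt_of_le_of_ne (hpos u (hA hu).1) (Ne.symm (hA hu).2)
  have hopen : ∀ u ∈ A, IsOpen[coneTop ω (wdist S) x r] (ball u) := by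
    intro u hu
    apply TopologicalSpace.isOpen_generateFrom_of_mem
    exact ⟨u, (hA hu).1, _, by linarith [hdpos u hu], rfl⟩
  have hself : ∀ u ∈ A, u ∈ ball u := by
    intro u hu
    have h0 : coneDist ω (wdist S) r u u = 0 := by
      refine tendsto_nhds_unique (tendsto_coneDist hS hrpos (hA hu).1 (hA hu).1) ?_
      simp [wdist_self]
    simp only [ball, Set.mem_ofPred_eq, h0]
    linarith [hdpos u hu]
  have hball : ∀ u ∈ A, ∀ v ∈ A, v ∈ ball u → (u ∈ U ↔ v ∈ U) := by
    intro u hu v hv huv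
    have ht := hdpos u hu
    set t := coneDist ω (wdist S) r u z with htdef
    have e1 := (tendsto_coneDist hS hrpos (hA hu).1 (hA hv).1).eventually
      (gt_mem_nhds (show coneDist ω (wdist S) r u v < t / 8 from huv))
    have e2 := (tendsto_coneDist hS hrpos (hA hu).1 hzc).eventually
      (lt_mem_nhds (show 7 * t / 8 < coneDist ω (wdist S) r u z by rw [← htdef]; linarith))
    constructor
    · intro h
      refine hstep u h v (t / 8) (by linarith) ?_
      filter_upwards [e1, e2] with n h1 h2
      rw [div_lt_iff₀ (hrpos n)] at h1
      rw [lt_div_iff₀ (hrpos n)] at h2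
      refine ⟨h1, ?_⟩
      nlinarith [mul_pos ht (hrpos n)]
    · intro h
      refine hstep v h u (t / 8) (by linarith) ?_
      filter_upwards [e1, e2] with n h1 h2
      rw [div_lt_iff₀ (hrpos n)] at h1
      rw [lt_div_iff₀ (hrpos n)] at h2
      have := wdist_triangle hS (u n) (v n) (z n)
      refine ⟨by rwa [wdist_comm hS], ?_⟩
      nlinarith [mul_pos ht (hrpos n)]
  have hyU : y ∈ U := by
    by_contra hyU
    let := coneTop ω (wdist S) x r
    obtain ⟨v, hvA, hv1, hv2⟩ := hpre (⋃ u ∈ A ∩ U, ball u) (⋃ u ∈ A \ U, ball u)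
      (isOpen_biUnion fun u hu => hopen u hu.1) (isOpen_biUnion fun u hu => hopen u hu.1)
      (by
        intro u hu
        by_cases h : u ∈ U
        · exact Or.inl (Set.mem_biUnion ⟨hu, h⟩ (hself u hu))
        · exact Or.inr (Set.mem_biUnion ⟨hu, h⟩ (hself u hu)))
      ⟨x, hxA, Set.mem_biUnion ⟨hxA, hxU⟩ (hself x hxA)⟩
      ⟨y, hyA, Set.mem_biUnion ⟨hyA, hyU⟩ (hself y hyA)⟩
    simp only [Set.mem_iUnion] at hv1 hv2
    obtain ⟨u, hu, huv⟩ := hv1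
    obtain ⟨u', hu', huv'⟩ := hv2
    exact hu'.2 ((hball u' hu'.1 v hvA huv').2 ((hball u hu.1 v hvA huv).1 hu.2))
  obtain ⟨k, hk, hev⟩ := hyU
  have hge : ∀ᶠ n in (ω : Filter ℕ), k ≤ n := by
    apply hωle
    rw [Nat.cofinite_eq_atTop]
    exact eventually_ge_atTop k
  obtain ⟨n, ⟨m, hm, hc⟩, hkn⟩ := (hev.and hge).exists
  have hkn' : (k : ℝ) ≤ (n + 1 : ℕ) := by exact_mod_cast hkn.trans n.le_succ
  have hkpos : (0 : ℝ) < k := by exact_mod_cast hk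
  refine hno n m (hm.trans ?_) (hc.mono ?_)
  · exact mul_le_mul_of_nonneg_right hkn' (hrpos n).le
  · intro w hw
    simp only [Set.mem_ofPred_eq] at hw ⊢
    refine lt_of_le_of_lt ?_ hw
    exact div_le_div_of_nonneg_left (hrpos n).le hkpos hkn'

end Wide

/-! ### Morse rays have superlinear divergence -/

section Divergence

variable {Γ : Type*} [Group Γ] {S : Set Γ}

theorem Conn.exists_weighted {A : Set Γ} {w : Γ → ℕ} {M : ℕ} (hw : ∀ x, w x ≤ M) {m : ℕ}
    {x y : Γ} (h : Conn S A m x y) :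
    ∃ k ≤ M * m, Pth (fun y z => wdist S y z ≤ 1) w k x y := by
  unfold Conn at h
  induction h with
  | nil => exact ⟨0, by simp, .nil _⟩
  | @snoc m x y z _ h2 ih =>
    obtain ⟨k, hk, hp⟩ := ih
    exact ⟨k + w z, by have := hw z; rw [mul_add]; omega, hp.snoc h2.1⟩

/-- A path minimising the total weight, for weights between `1` and `M`, is a quasi-geodesic:
`j - i` is at most the weight of the part between the indices `i < j`, which by minimality is
at most the weight of a geodesic with the same endpoints. -/
theorem exists_weight_min (hS : Subgroup.closure S = ⊤) {w : Γ → ℕ} {M : ℕ}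
    (hw : ∀ x, w x ≤ M) (hw1 : ∀ x, 1 ≤ w x) {m : ℕ} {u v : Γ}
    (h : Pth (fun y z => wdist S y z ≤ 1) w m u v) :
    ∃ (n : ℕ) (c : ℕ → Γ) (f : ℕ → ℕ), c 0 = u ∧ c n = v ∧ f n ≤ m ∧
      (∀ i < n, wdist S (c i) (c (i + 1)) ≤ 1 ∧ f (i + 1) = f i + w (c (i + 1))) ∧
      ∀ i j, i ≤ j → j ≤ n → wdist S (c i) (c j) ≤ (j : ℝ) - i ∧
        (j : ℝ) - i ≤ M * wdist S (c i) (c j) := by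
  classical
  have hex : ∃ m, Pth (fun y z => wdist S y z ≤ 1) w m u v := ⟨m, h⟩
  obtain ⟨n, c, f, h0, hn, hf0, hfn, hc⟩ := (Nat.find_spec hex).exists_seq
  refine ⟨n, c, f, h0, hn, hfn ▸ Nat.find_min' hex h, hc, ?_⟩
  intro i j hij hj
  constructor
  · induction j, hij using Nat.le_induction with
    | base => simp [wdist_self]
    | succ j hij ih =>
      have h1 := ih (by omega)
      have h2 := (hc j (by omega)).1
      have h3 := wdist_triangle hS (c i) (c j) (c (j + 1))
      push_cast
      linarith
  · obtain ⟨q, hq, hgeo⟩ := conn_geod hS (A := Set.univ) (c i) (c j) (fun _ _ _ => trivial)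
    obtain ⟨k, hk, hp⟩ := hgeo.exists_weighted hw
    obtain ⟨k1, hk1, hp1⟩ := Pth.of_seq (adj := fun y z => wdist S y z ≤ 1) (w := w) hc (Nat.zero_le i) (hij.trans hj)
    obtain ⟨k2, hk2, hp2⟩ := Pth.of_seq (adj := fun y z => wdist S y z ≤ 1) (w := w) hc hj le_rfl
    rw [h0] at hp1
    rw [hn] at hp2
    have hmin := Nat.find_min' hex ((hp1.trans hp).trans hp2)
    have hgrow : ∀ j, i ≤ j → j ≤ n → f i + (j - i) ≤ f j := by
      intro j hij
      induction j, hij using Nat.le_induction with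
      | base => simp
      | succ j hij ih =>
        intro hj
        have h1 := ih (by omega)
        have h2 := (hc j (by omega)).2
        have h3 := hw1 (c (j + 1))
        omega
    have h1 := hgrow j hij hj
    have h2 : j - i ≤ M * q := by omega
    rw [← hq]
    have : ((j - i : ℕ) : ℝ) ≤ ((M * q : ℕ) : ℝ) := by exact_mod_cast h2
    rw [Nat.cast_sub hij] at this
    push_cast at this
    exact this

/-- A discrete path which is a quasi-geodesic, as a function of a real parameter. -/
theorem isQG_floor (hS : Subgroup.closure S = ⊤) {n M : ℕ} {c : ℕ → Γ}
    (hc : ∀ i j, i ≤ j → j ≤ n → wdist S (c i) (c j) ≤ (j : ℝ) - i ∧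
        (j : ℝ) - i ≤ M * wdist S (c i) (c j)) :
    IsQG (wdist S) (M + 2) (Set.Icc 0 (n : ℝ)) (fun t => c ⌊t⌋₊) := by
  have hM : (0 : ℝ) ≤ M := Nat.cast_nonneg M
  have key : ∀ s ∈ Set.Icc 0 (n : ℝ), ∀ t ∈ Set.Icc 0 (n : ℝ), s ≤ t →
      |s - t| / (M + 2) - (M + 2) ≤ wdist S (c ⌊s⌋₊) (c ⌊t⌋₊) ∧
        wdist S (c ⌊s⌋₊) (c ⌊t⌋₊) ≤ (M + 2) * |s - t| + (M + 2) := by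
    intro s hs t ht hst
    have htn : ⌊t⌋₊ ≤ n := by
      have := Nat.floor_le_floor ht.2
      rwa [Nat.floor_natCast] at this
    obtain ⟨h1, h2⟩ := hc ⌊s⌋₊ ⌊t⌋₊ (Nat.floor_le_floor hst) htn
    have f1 := Nat.floor_le hs.1
    have f2 := Nat.lt_floor_add_one s
    have f3 := Nat.floor_le ht.1
    have f4 := Nat.lt_floor_add_one t
    rw [abs_of_nonpos (by linarith)]
    have hd := wdist_nonneg (S := S) (c ⌊s⌋₊) (c ⌊t⌋₊)
    constructor
    · rw [sub_le_iff_le_add, div_le_iff₀ (by linarith)]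
      nlinarith
    · nlinarith
  refine ⟨by linarith, fun s hs t ht => ?_⟩
  rcases le_total s t with h | h
  · exact key s hs t ht h
  · rw [abs_sub_comm, wdist_comm hS]
    exact key t ht s hs h

/-- Morse rays diverge superlinearly, uniformly in the Morse gauge: a path of length at most
`L * r` joining two points of the ray on either side of `γ s` meets the ball of radius `δ * r`
around `γ s`.

Otherwise, weight the vertices in this ball by a large constant `M` and the others by `1`. A path
of minimal weight is a quasi-geodesic with constants depending on `M` only, and it cannot reach
the ball of radius `δ * r / 4` since this would be too expensive. But it remains close to `γ` by
the Morse property, so it passes close to `γ s`. -/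
theorem morse_divergence (hS : Subgroup.closure S = ⊤) (N : ℝ → ℝ) (L : ℝ) {δ : ℝ}
    (hδ : 0 < δ) :
    ∃ R : ℝ, ∀ γ : ℕ → Γ, IsGeodSeq (wdist S) γ → MorseSet (wdist S) N (Set.range γ) →
      ∀ a s b : ℕ, a ≤ s → s ≤ b → ∀ r : ℝ, R ≤ r → δ * r < wdist S (γ b) (γ s) →
      ∀ m : ℕ, (m : ℝ) ≤ L * r → ¬ Conn S {w | δ * r < wdist S w (γ s)} m (γ a) (γ b) := by
  classical
  obtain ⟨M, hM⟩ := exists_nat_gt (max (2 * L / δ) 1)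
  have hM1 : (1 : ℝ) < M := (le_max_right _ _).trans_lt hM
  have hML : L < M * δ / 2 := by
    have := (le_max_left _ _).trans_lt hM
    rw [div_lt_iff₀ hδ] at this
    linarith
  refine ⟨max (4 / δ) (4 * (3 * N (M + 2) + 1) / δ), ?_⟩
  intro γ hγ hmorse a s b has hsb r hr hb m hm hconn
  have hr1 : 4 ≤ δ * r := by
    have := (le_max_left _ _).trans hr
    rwa [div_le_iff₀ hδ, mul_comm] at this
  have hr2 : 4 * (3 * N (M + 2) + 1) ≤ δ * r := by
    have := (le_max_right _ _).trans hr
    rwa [div_le_iff₀ hδ, mul_comm r] at this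
  have hrpos : 0 < r := by
    by_contra h
    push Not at h
    nlinarith
  set z := γ s with hz
  let w : Γ → ℕ := fun x => if wdist S x z ≤ δ * r then M else 1
  have hM1' : 1 ≤ M := by exact_mod_cast hM1.le
  have hwM : ∀ x, w x ≤ M := by intro x; simp only [w]; split_ifs <;> omega
  have hw1 : ∀ x, 1 ≤ w x := by intro x; simp only [w]; split_ifs <;> omega
  have hp : Pth (fun y z => wdist S y z ≤ 1) w m (γ a) (γ b) := by
    refine Pth.mono hconn ?_
    rintro x y ⟨h1, h2⟩
    simp only [Set.mem_ofPred_eq] at h2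
    exact ⟨h1, by simp [w, h2]⟩
  obtain ⟨n, c, f, h0, hn, hfm, hc, hqg⟩ := exists_weight_min hS hwM hw1 hp
  -- the weight of a path bounds the variation of this function along it
  let φ : Γ → ℝ := fun x => M * min (wdist S x z) (δ * r - 1)
  have hφ : ∀ i j, i ≤ j → j ≤ n → φ (c j) - φ (c i) ≤ (f j : ℝ) - f i := by
    intro i j hij
    induction j, hij using Nat.le_induction with
    | base => simp
    | succ j hij ih =>
      intro hj
      have h1 := ih (by omega)
      obtain ⟨h2, h3⟩ := hc j (by omega)
      have h4 := wdist_triangle hS (c j) (c (j + 1)) z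
      have h5 := wdist_tri' hS (c (j + 1)) (c j) z
      have h6 : φ (c (j + 1)) - φ (c j) ≤ w (c (j + 1)) := by
        simp only [φ, w]
        split_ifs with h
        · have : min (wdist S (c (j + 1)) z) (δ * r - 1) - min (wdist S (c j) z) (δ * r - 1) ≤ 1 := by
            rcases min_cases (wdist S (c j) z) (δ * r - 1) with h7 | h7 <;>
            rcases min_cases (wdist S (c (j + 1)) z) (δ * r - 1) with h8 | h8 <;> linarith
          nlinarith
        · push Not at h
          rw [min_eq_right (by linarith), min_eq_right (by linarith)]
          simp
      rw [h3]
      push_cast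
      linarith
  have hfar : ∀ i ≤ n, δ * r / 4 < wdist S (c i) z := by
    intro i hi
    by_contra hlt
    push Not at hlt
    have h1 := hφ i n hi le_rfl
    have h2 : φ (c n) = M * (δ * r - 1) := by
      simp only [φ]; rw [hn, min_eq_right (by linarith)]
    have h3 : φ (c i) ≤ M * (δ * r / 4) := by
      simp only [φ]
      gcongr
      exact (min_le_left _ _).trans hlt
    have h4 : (f n : ℝ) ≤ L * r := le_trans (by exact_mod_cast hfm) hm
    have h5 : (0 : ℝ) ≤ f i := Nat.cast_nonneg _
    have h6 : M * (δ * r / 2) ≤ M * (δ * r - 1) - M * (δ * r / 4) := by nlinarith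
    nlinarith
  have hnear := hmorse (M + 2) (by linarith) 0 n (Nat.cast_nonneg n) _ (isQG_floor hS hqg)
    (by simp [h0]) (by simp [hn])
  have hnear' : ∀ i ≤ n, ∃ k : ℕ, wdist S (c i) (γ k) ≤ N (M + 2) := by
    intro i hi
    obtain ⟨_, ⟨k, rfl⟩, hk⟩ := hnear i ⟨Nat.cast_nonneg i, by exact_mod_cast hi⟩
    exact ⟨k, by simpa using hk⟩
  set D := N (M + 2) with hD
  have hD0 : 0 ≤ D := by
    obtain ⟨k, hk⟩ := hnear' 0 (Nat.zero_le _)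
    exact (wdist_nonneg _ _).trans hk
  -- the path crosses from one side of `γ s` to the other
  have hmeet : ∃ i ≤ n, wdist S (c i) z ≤ 3 * D + 1 := by
    by_cases hP : ∃ k ≤ s, wdist S (c n) (γ k) ≤ D
    · obtain ⟨k, hk, hkD⟩ := hP
      refine ⟨n, le_rfl, ?_⟩
      rw [hn] at hkD ⊢
      rw [hγ] at hkD
      rw [hz, hγ]
      have h1 : (k : ℝ) ≤ s := by exact_mod_cast hk
      have h2 : (s : ℝ) ≤ b := by exact_mod_cast hsb
      rw [abs_of_nonneg (by linarith)] at hkD ⊢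
      linarith
    · have hP0 : ∃ k ≤ s, wdist S (c 0) (γ k) ≤ D := ⟨a, has, by rw [h0, wdist_self]; exact hD0⟩
      have hstep : ∃ i < n, (∃ k ≤ s, wdist S (c i) (γ k) ≤ D) ∧
          ¬ ∃ k ≤ s, wdist S (c (i + 1)) (γ k) ≤ D := by
        by_contra hcon
        push Not at hcon
        have : ∀ i ≤ n, ∃ k ≤ s, wdist S (c i) (γ k) ≤ D := by
          intro i
          induction i with
          | zero => exact fun _ => hP0
          | succ i ih =>
            intro hi
            obtain ⟨k, hk, hk'⟩ := ih (by omega)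
            exact hcon i (by omega) ⟨k, hk, hk'⟩
        exact hP (this n le_rfl)
      obtain ⟨i, hi, ⟨k, hk, hkD⟩, hno⟩ := hstep
      obtain ⟨k', hk'⟩ := hnear' (i + 1) hi
      have hlt : s < k' := by
        by_contra h
        exact hno ⟨k', by omega, hk'⟩
      refine ⟨i, hi.le, ?_⟩
      have e1 := wdist_tri' hS (γ k) (c i) (γ k')
      have e2 := wdist_triangle hS (c i) (c (i + 1)) (γ k')
      have e3 := (hc i hi).1
      have e4 := wdist_triangle hS (c i) (γ k) z
      rw [hγ] at e1
      rw [hz, hγ] at e4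
      have h1 : (k : ℝ) ≤ s := by exact_mod_cast hk
      have h2 : (s : ℝ) ≤ k' := by exact_mod_cast hlt.le
      rw [abs_of_nonpos (by linarith)] at e1 e4
      rw [hz]
      linarith
  obtain ⟨i, hi, hle⟩ := hmeet
  have := hfar i hi
  linarith

end Divergence

/-! ### Paths in the group and branches of the tree -/

section Tree

variable {VT : Type*}

/-- The tree `T` with all edges at `p` removed. The components of this graph other than `{p}` are
the branches of `T` at `p`. -/
def awayGraph (T : SimpleGraph VT) (p : VT) : SimpleGraph VT where
  Adj x y := T.Adj x y ∧ x ≠ p ∧ y ≠ p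
  symm := ⟨fun _ _ h => ⟨h.1.symm, h.2.2, h.2.1⟩⟩
  loopless := ⟨fun _ h => h.1.ne rfl⟩

theorem away_walk_notMem {T : SimpleGraph VT} {p x y : VT} (W : (awayGraph T p).Walk x y)
    (hx : x ≠ p) : p ∉ W.support := by
  induction W with
  | nil => simpa using hx.symm
  | cons h W ih =>
    simp only [SimpleGraph.Walk.support_cons, List.mem_cons, not_or]
    exact ⟨hx.symm, ih h.2.2⟩

theorem away_reachable_ne {T : SimpleGraph VT} {p x y : VT}
    (h : (awayGraph T p).Reachable x y) (hx : x ≠ p) : y ≠ p := by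
  obtain ⟨W⟩ := h
  rintro rfl
  exact away_walk_notMem W hx W.end_mem_support

/-- A branch contains a single neighbour of `p`. -/
theorem branch_unique {T : SimpleGraph VT} (hT : T.IsAcyclic) {p b b' : VT} (hb : T.Adj p b)
    (hb' : T.Adj p b') (h : (awayGraph T p).Reachable b b') : b = b' := by
  classical
  have hle : awayGraph T p ≤ T := fun _ _ h => h.1
  obtain ⟨W, hW⟩ := h.exists_isPath
  have hp : (SimpleGraph.Walk.cons hb (W.mapLe hle)).IsPath := by
    rw [SimpleGraph.Walk.cons_isPath_iff]
    refine ⟨hW.mapLe hle, ?_⟩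
    have := away_walk_notMem W hb.ne'
    simpa using this
  have := (hT.subsingleton_path p b').elim ⟨_, hp⟩ (SimpleGraph.Path.singleton hb')
  have hlen := congrArg (fun q : T.Path p b' => q.1.length) this
  simp [SimpleGraph.Path.singleton] at hlen
  exact hlen.eq

/-- A walk entering a branch traverses the edge joining `p` to this branch. -/
theorem walk_enters {T : SimpleGraph VT} {p x y : VT} (W : T.Walk x y) (hy : y ≠ p)
    (h : ¬ (awayGraph T p).Reachable x y) :
    ∃ d ∈ W.darts, d.fst = p ∧ (awayGraph T p).Reachable d.snd y := by
  induction W with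
  | nil => exact absurd (SimpleGraph.Reachable.refl _) h
  | @cons x x' y hadj W ih =>
    by_cases h' : (awayGraph T p).Reachable x' y
    · refine ⟨⟨(x, x'), hadj⟩, by simp, ?_, h'⟩
      by_contra hx
      have hx' : x' ≠ p := away_reachable_ne h'.symm hy
      have hA : (awayGraph T p).Adj x x' := ⟨hadj, hx, hx'⟩
      exact h (hA.reachable.trans h')
    · obtain ⟨d, hd, hd'⟩ := ih hy h'
      exact ⟨d, by simp [hd], hd'⟩

variable {G : Type*} [Group G] [MulAction G VT]

/-- A choice of representatives of the orbits of a subgroup. -/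
theorem exists_rep (V : Subgroup G) : ∃ rep : VT → VT, (∀ b, ∃ v ∈ V, v • rep b = b) ∧
    ∀ v ∈ V, ∀ b, rep (v • b) = rep b := by
  refine ⟨fun b => (Quotient.mk (MulAction.orbitRel V VT) b).out, fun b => ?_, fun v hv b => ?_⟩
  · have h : (MulAction.orbitRel V VT) _ b :=
      Quotient.exact (Quotient.out_eq (Quotient.mk (MulAction.orbitRel V VT) b))
    rw [MulAction.orbitRel_apply, MulAction.mem_orbit_iff] at h
    obtain ⟨v, hv⟩ := h
    refine ⟨(v : G)⁻¹, V.inv_mem v.2, ?_⟩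
    simp only []
    rw [← hv, Subgroup.smul_def, inv_smul_smul]
  · have : (Quotient.mk (MulAction.orbitRel V VT) (v • b)) =
        Quotient.mk (MulAction.orbitRel V VT) b := by
      apply Quotient.sound
      change (MulAction.orbitRel V VT) _ _
      rw [MulAction.orbitRel_apply]
      exact ⟨⟨v, hv⟩, rfl⟩
    simp only [this]

/-- When an edge of the Cayley graph enters a branch at `p`, say with first vertex `b`, its
initial vertex is uniformly close to an element `v` of the stabiliser of `p` carrying the
representative of `b` to `b`; finitely many representatives occur. Indeed a translate of
`(p, b)` occurs on one of finitely many fixed walks in the tree. -/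
theorem exists_enter (T : SimpleGraph VT) (hT : T.Connected)
    (hadj : ∀ (g : G) (a b : VT), T.Adj a b → T.Adj (g • a) (g • b)) (p : VT)
    (S : Finset G) (hS : Subgroup.closure (S : Set G) = ⊤) (rep : VT → VT)
    (hrep : ∀ b, ∃ v ∈ MulAction.stabilizer G p, v • rep b = b)
    (hrep' : ∀ v ∈ MulAction.stabilizer G p, ∀ b, rep (v • b) = rep b) :
    ∃ (κ : ℕ) (B : Finset VT), (∀ b ∈ B, T.Adj p b) ∧
      ∀ g h : G, wdist (S : Set G) g h ≤ 1 → h • p ≠ p →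
        ¬ (awayGraph T p).Reachable (g • p) (h • p) →
        ∃ b, T.Adj p b ∧ (awayGraph T p).Reachable b (h • p) ∧ rep b ∈ B ∧
          ∃ v ∈ MulAction.stabilizer G p, v • rep b = b ∧ wdist (S : Set G) g v ≤ κ := by
  classical
  let W : ∀ s : G, T.Walk p (s • p) := fun s => (hT.preconnected p (s • p)).some
  let F : Set (VT × VT) := ⋃ s ∈ {s : G | wordLength (S : Set G) s ≤ 1},
    ((W s).darts.map fun d => d.toProd).toFinset
  have hF : F.Finite := (finite_wordBall S hS 1).biUnion fun s _ => Finset.finite_toSet _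
  have hloc : ∀ f : VT × VT, ∃ (k : ℕ) (b₀ : VT), ∀ (c : G) (b : VT), T.Adj p b → c • f.1 = p →
      c • f.2 = b → rep b = b₀ ∧ ∃ v ∈ MulAction.stabilizer G p, v • rep b = b ∧
        wdist (S : Set G) c v ≤ k := by
    intro f
    by_cases hex : ∃ c : G, c • f.1 = p
    · obtain ⟨c₀, hc₀⟩ := hex
      obtain ⟨u, hu, hub⟩ := hrep (c₀ • f.2)
      refine ⟨wordLength (S : Set G) (c₀⁻¹ * u), rep (c₀ • f.2), ?_⟩
      rintro c b - hc rfl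
      have hcV : c * c₀⁻¹ ∈ MulAction.stabilizer G p := by
        rw [MulAction.mem_stabilizer_iff, mul_smul, ← hc₀, inv_smul_smul, hc, hc₀]
      have hcb : (c * c₀⁻¹) • (c₀ • f.2) = c • f.2 := by rw [mul_smul, inv_smul_smul]
      have hr : rep (c • f.2) = rep (c₀ • f.2) := by rw [← hcb, hrep' _ hcV]
      refine ⟨hr, c * c₀⁻¹ * u, mul_mem hcV hu, ?_, ?_⟩
      · rw [hr, mul_smul, hub, hcb]
      · simp only [wdist]
        rw [show c⁻¹ * (c * c₀⁻¹ * u) = c₀⁻¹ * u by group]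
    · exact ⟨0, p, fun c b _ hc _ => absurd ⟨c, hc⟩ hex⟩
  choose k b₀ hk using hloc
  refine ⟨hF.toFinset.sup k, (hF.toFinset.image b₀).filter (fun b => T.Adj p b),
    by simp, ?_⟩
  intro g h hgh hh hreach
  have hgs : g • (g⁻¹ * h) • p = h • p := by rw [← mul_smul, mul_inv_cancel_left]
  let φ : T →g T := ⟨fun x => g • x, fun {a b} hab => hadj g a b hab⟩
  obtain ⟨d, hd, hdp, hdr⟩ := walk_enters (p := p) ((W (g⁻¹ * h)).map φ)
    (by change g • (g⁻¹ * h) • p ≠ p; rwa [hgs])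
    (by change ¬ (awayGraph T p).Reachable (g • p) (g • (g⁻¹ * h) • p); rwa [hgs])
  change (awayGraph T p).Reachable d.snd (g • (g⁻¹ * h) • p) at hdr
  rw [hgs] at hdr
  rw [SimpleGraph.Walk.darts_map, List.mem_map] at hd
  obtain ⟨e, he, rfl⟩ := hd
  have he1 : g • e.fst = p := hdp
  have hpb : T.Adj p (g • e.snd) := by
    have := hadj g _ _ e.adj
    rwa [he1] at this
  have heF : e.toProd ∈ F := by
    simp only [F, Set.mem_iUnion]
    refine ⟨g⁻¹ * h, ?_, ?_⟩
    · simp only [wdist] at hgh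
      simp only [Set.mem_ofPred_eq]
      exact_mod_cast hgh
    · simp only [List.coe_toFinset, Set.mem_ofPred_eq, List.mem_map]
      exact ⟨e, he, rfl⟩
  obtain ⟨hr, v, hv, hvb, hvd⟩ := hk e.toProd g (g • e.snd) hpb he1 rfl
  have hv' : v⁻¹ • p = p := by
    rw [inv_smul_eq_iff]; exact (MulAction.mem_stabilizer_iff.1 hv).symm
  refine ⟨g • e.snd, hpb, hdr, ?_, v, hv, hvb, hvd.trans ?_⟩
  · rw [Finset.mem_filter]
    refine ⟨?_, ?_⟩
    · rw [hr]; exact Finset.mem_image_of_mem _ (hF.mem_toFinset.2 heF)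
    · have := hadj v⁻¹ _ _ hpb
      rwa [hv', ← hvb, inv_smul_smul] at this
  · exact_mod_cast Finset.le_sup (f := k) (hF.mem_toFinset.2 heF)

/-- If two edges `(g, h)` and `(g', h')` of the Cayley graph enter the same branch at `p`, then
`g` and `g'` are uniformly close to elements of the stabiliser of `p` lying in the same coset of
the stabiliser of an edge at `p`; finitely many edges suffice. -/
theorem exists_excursion (T : SimpleGraph VT) (hT : T.IsTree)
    (hadj : ∀ (g : G) (a b : VT), T.Adj a b → T.Adj (g • a) (g • b)) (p : VT)
    (S : Finset G) (hS : Subgroup.closure (S : Set G) = ⊤) :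
    ∃ (κ : ℕ) (B : Finset VT), (∀ b ∈ B, T.Adj p b) ∧
      ∀ g h g' h' : G, wdist (S : Set G) g h ≤ 1 → wdist (S : Set G) g' h' ≤ 1 →
        h • p ≠ p → ¬ (awayGraph T p).Reachable (g • p) (h • p) →
        ¬ (awayGraph T p).Reachable (g' • p) (h' • p) →
        (awayGraph T p).Reachable (h • p) (h' • p) →
        ∃ b ∈ B, ∃ v v' : MulAction.stabilizer G p, wdist (S : Set G) g v ≤ κ ∧
          wdist (S : Set G) g' v' ≤ κ ∧ ((v⁻¹ * v' : MulAction.stabilizer G p) : G) ∈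
            edgeStab G p b := by
  obtain ⟨rep, hrep, hrep'⟩ := exists_rep (VT := VT) (MulAction.stabilizer G p)
  obtain ⟨κ, B, hB, hκ⟩ := exists_enter T hT.connected hadj p S hS rep hrep hrep'
  refine ⟨κ, B, hB, ?_⟩
  intro g h g' h' hgh hgh' hp hr hr' hrr
  obtain ⟨b, hpb, hbr, hbB, v, hv, hvb, hvd⟩ := hκ g h hgh hp hr
  obtain ⟨b', hpb', hbr', hbB', v', hv', hvb', hvd'⟩ :=
    hκ g' h' hgh' (away_reachable_ne hrr hp) hr'
  obtain rfl : b = b' := branch_unique hT.isAcyclic hpb hpb' ((hbr.trans hrr).trans hbr'.symm)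
  refine ⟨rep b, hbB, ⟨v, hv⟩, ⟨v', hv'⟩, hvd, hvd', ?_, ?_⟩
  · exact (MulAction.stabilizer G p).mul_mem ((MulAction.stabilizer G p).inv_mem hv) hv'
  · change (v⁻¹ * v') • rep b = rep b
    rw [mul_smul, hvb', inv_smul_eq_iff, hvb]

/-- Decomposition of an edge path `c` with endpoints in the stabiliser `V` of `p` into steps
close to `V` and excursions into branches. The relation `R m x y` expresses that `x` can be
joined to `y` in `V` at cost `m`. -/
theorem path_decomposition {T : SimpleGraph VT} {p : VT} {S : Set G}
    (hS : Subgroup.closure S = ⊤) {κ : ℕ} {B : Finset VT}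
    (hexc : ∀ g h g' h' : G, wdist S g h ≤ 1 → wdist S g' h' ≤ 1 →
        h • p ≠ p → ¬ (awayGraph T p).Reachable (g • p) (h • p) →
        ¬ (awayGraph T p).Reachable (g' • p) (h' • p) →
        (awayGraph T p).Reachable (h • p) (h' • p) →
        ∃ b ∈ B, ∃ v v' : MulAction.stabilizer G p, wdist S g v ≤ κ ∧
          wdist S g' v' ≤ κ ∧ ((v⁻¹ * v' : MulAction.stabilizer G p) : G) ∈ edgeStab G p b)
    {n : ℕ} {c : ℕ → G} (hc : ∀ i < n, wdist S (c i) (c (i + 1)) ≤ 1)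
    {R : ℕ → MulAction.stabilizer G p → MulAction.stabilizer G p → Prop}
    (hmono : ∀ m m' x y, m ≤ m' → R m x y → R m' x y)
    (htrans : ∀ m m' x y z, R m x y → R m' y z → R (m + m') x z)
    {M : ℕ}
    (hclose : ∀ i ≤ n, ∀ x y : MulAction.stabilizer G p, wdist S (c i) x ≤ κ + 1 →
      wdist S (c i) y ≤ κ + 1 → R M x y)
    (hbranch : ∀ i j, i < j → j ≤ n → ∀ x y : MulAction.stabilizer G p,
      wdist S (c i) x ≤ κ + 1 → wdist S (c j) y ≤ κ + 1 →
      (∃ b ∈ B, ((x⁻¹ * y : MulAction.stabilizer G p) : G) ∈ edgeStab G p b) →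
      R (M * (j - i)) x y)
    (x y : MulAction.stabilizer G p) (hx : c 0 = x) (hy : c n = y) :
    R (2 * M * n + M) x y := by
  classical
  have hκ0 : (0 : ℝ) ≤ κ := Nat.cast_nonneg κ
  have hynp : c n • p = p := by rw [hy]; exact y.2
  have key : ∀ k i : ℕ, n - i ≤ k → i ≤ n →
      (i < n → c i • p = p ∨ ¬ (awayGraph T p).Reachable (c i • p) (c (i + 1) • p)) →
      ∀ v : MulAction.stabilizer G p, wdist S (c i) v ≤ κ + 1 → R (2 * M * (n - i) + M) v y := by
    intro k
    induction k with
    | zero =>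
      intro i hk hi _ v hv
      obtain rfl : i = n := by omega
      refine hmono M _ _ _ (by omega) (hclose i le_rfl v y hv ?_)
      rw [hy, wdist_self]; linarith
    | succ k ih =>
      intro i hk hi hst v hv
      rcases hi.eq_or_lt with rfl | hin
      · refine hmono M _ _ _ (by omega) (hclose i le_rfl v y hv ?_)
        rw [hy, wdist_self]; linarith
      by_cases hp : c (i + 1) • p = p
      · have h1 := hclose i hi v ⟨c (i + 1), hp⟩ hv (by
          have := hc i hin
          simp only
          linarith)
        have h2 := ih (i + 1) (by omega) hin (fun _ => Or.inl hp) ⟨c (i + 1), hp⟩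
          (by rw [wdist_self]; linarith)
        refine hmono _ _ _ _ ?_ (htrans _ _ _ _ _ h1 h2)
        obtain ⟨q, rfl⟩ : ∃ q, n = i + 1 + q := ⟨n - (i + 1), by omega⟩
        rw [show i + 1 + q - (i + 1) = q by omega, show i + 1 + q - i = q + 1 by omega]
        ring_nf; omega
      · have hnr : ¬ (awayGraph T p).Reachable (c i • p) (c (i + 1) • p) := by
          rcases hst hin with h | h
          · intro hr
            exact away_reachable_ne hr.symm hp h
          · exact h
        let P : ℕ → Prop := fun j => (awayGraph T p).Reachable (c (i + 1) • p) (c j • p)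
        set j := Nat.findGreatest P n with hj
        have hPi : P (i + 1) := SimpleGraph.Reachable.refl _
        have hij : i + 1 ≤ j := Nat.le_findGreatest hin hPi
        have hPj : P j := Nat.findGreatest_spec (P := P) hin hPi
        have hjp : c j • p ≠ p := away_reachable_ne hPj hp
        have hjn : j < n := by
          refine lt_of_le_of_ne (Nat.findGreatest_le n) ?_
          intro h
          rw [h] at hjp
          exact hjp hynp
        have hPj' : ¬ P (j + 1) := Nat.findGreatest_is_greatest (Nat.lt_succ_self _) hjn
        have hnr' : ¬ (awayGraph T p).Reachable (c j • p) (c (j + 1) • p) := fun h =>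
          hPj' (SimpleGraph.Reachable.trans hPj h)
        obtain ⟨b, hb, v₁, v₂, h1, h2, h3⟩ := hexc (c i) (c (i + 1)) (c (j + 1)) (c j)
          (hc i hin) (by rw [wdist_comm hS]; exact hc j hjn) hp hnr (fun h => hnr' h.symm) hPj
        have h2' : wdist S (c j) v₂ ≤ κ + 1 := by
          have := wdist_triangle hS (c j) (c (j + 1)) v₂
          linarith [hc j hjn]
        have r1 := hclose i hi v v₁ hv (by linarith)
        have r2 := hbranch i j (by omega) hjn.le v₁ v₂ (by linarith) h2' ⟨b, hb, h3⟩
        have r3 := ih j (by omega) hjn.le (fun _ => Or.inr hnr') v₂ h2'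
        refine hmono _ _ _ _ ?_ (htrans _ _ _ _ _ r1 (htrans _ _ _ _ _ r2 r3))
        obtain ⟨q, hq⟩ : ∃ q, j = i + 1 + q := ⟨j - (i + 1), by omega⟩
        obtain ⟨q', hq'⟩ : ∃ q', n = j + q' := ⟨n - j, by omega⟩
        rw [show n - j = q' by omega, show j - i = q + 1 by omega,
          show n - i = q + 1 + q' by omega]
        nlinarith [Nat.zero_le (M * q)]
  have := key n 0 (by omega) (Nat.zero_le _) (fun _ => Or.inl (by rw [hx]; exact x.2)) x
    (by rw [hx, wdist_self]; linarith)
  simpa using this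

end Tree

/-! ### The vertex group is undistorted -/

section Undistorted

variable {G : Type*} [Group G]

theorem wordLength_map_le {Γ : Type*} [Group Γ] {S : Set Γ} (hS : Subgroup.closure S = ⊤)
    {S' : Set G} (hS' : Subgroup.closure S' = ⊤) (f : Γ →* G) {c : ℕ}
    (hc : ∀ s ∈ S, wordLength S' (f s) ≤ c) (g : Γ) :
    wordLength S' (f g) ≤ c * wordLength S g := by
  obtain ⟨l, hl, hlS, rfl⟩ := exists_list_wordLength hS g
  rw [← hl]
  clear hl
  induction l with
  | nil => simp [wordLength_one]
  | cons a l ih =>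
    have h1 := ih fun x hx => hlS x (by simp [hx])
    have h2 : wordLength S' (f a) ≤ c := by
      rcases hlS a (by simp) with h | h
      · exact hc a h
      · rw [← wordLength_inv hS', ← map_inv]; exact hc _ h
    have h3 := wordLength_mul_le hS' (f a) (f l.prod)
    rw [List.prod_cons, map_mul, List.length_cons]
    nlinarith

theorem closure_preimage_subgroup {V : Subgroup G} {S : Set G} (h : Subgroup.closure S = V) :
    Subgroup.closure (Subtype.val ⁻¹' S : Set V) = ⊤ := by
  subst h
  exact Subgroup.closure_closure_coe_preimage

/-- The word length on a subgroup can be computed in the ambient group. -/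
theorem wordLength_subgroup {V : Subgroup G} {S : Set G} (h : Subgroup.closure S = V) (v : V) :
    wordLength (Subtype.val ⁻¹' S : Set V) v = wordLength S (v : G) := by
  have hV : ∀ x, x ∈ S ∨ x⁻¹ ∈ S → x ∈ V := by
    rintro x (hx | hx)
    · exact h ▸ Subgroup.subset_closure hx
    · rw [← V.inv_mem_iff]; exact h ▸ Subgroup.subset_closure hx
  obtain ⟨l, hl, hlS, hlv⟩ := exists_list_wordLength (closure_preimage_subgroup h) v
  have hmap : (∀ x ∈ l.map (Subtype.val : V → G), x ∈ S ∨ x⁻¹ ∈ S) ∧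
      (l.map (Subtype.val : V → G)).prod = v := by
    constructor
    · intro x hx
      obtain ⟨y, hy, rfl⟩ := List.mem_map.1 hx
      exact hlS y hy
    · rw [← hlv]; exact (map_list_prod V.subtype l).symm
  apply le_antisymm
  · obtain ⟨l', hl', hlS', hlv'⟩ := Nat.sInf_mem (s := {n : ℕ | ∃ l : List G, l.length = n ∧
      (∀ x ∈ l, x ∈ S ∨ x⁻¹ ∈ S) ∧ l.prod = (v : G)}) ⟨_, _, rfl, hmap⟩
    change l'.length = wordLength S (v : G) at hl'
    rw [← hl']
    clear hl'
    lift l' to List V using fun x hx => hV x (hlS' x hx)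
    have hv : v = l'.prod := by
      apply Subtype.ext
      rw [← hlv']; exact (map_list_prod V.subtype l').symm
    rw [hv, List.length_map]
    refine wordLength_le_of_list l' fun x hx => ?_
    exact hlS' x (List.mem_map_of_mem hx)
  · rw [← hl, ← hmap.2]
    simpa using wordLength_le_of_list _ hmap.1

theorem wdist_subgroup {V : Subgroup G} {S : Set G} (h : Subgroup.closure S = V) (x y : V) :
    wdist (Subtype.val ⁻¹' S : Set V) x y = wdist S (x : G) (y : G) := by
  simp only [wdist, wordLength_subgroup h]
  rfl

theorem wdist_coe_le {V : Subgroup G} {S' : Set V} (hS' : Subgroup.closure S' = ⊤) {S : Set G}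
    (hS : Subgroup.closure S = ⊤) (hSS : ∀ s ∈ S', (s : G) ∈ S) (x y : V) :
    wdist S (x : G) (y : G) ≤ wdist S' x y := by
  have := wordLength_map_le hS' hS V.subtype (c := 1) (fun s hs => by
    simpa using wordLength_le_of_list (S := S) [(s : G)] (by simpa using Or.inl (hSS s hs)))
    (x⁻¹ * y)
  simp only [wdist]
  rw [one_mul] at this
  exact_mod_cast this

/-- Elements of a finitely generated subgroup of bounded length in the group have bounded length
in the subgroup. -/
theorem exists_proper_bound {V : Subgroup G} (S' : Set V) (S : Finset G)
    (hS : Subgroup.closure (S : Set G) = ⊤) (n : ℕ) :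
    ∃ K : ℕ, ∀ x y : V, wdist (S : Set G) (x : G) (y : G) ≤ n → wdist S' x y ≤ K := by
  classical
  have hf : {v : V | wordLength (S : Set G) (v : G) ≤ n}.Finite :=
    Set.Finite.preimage Subtype.val_injective.injOn (finite_wordBall S hS n)
  refine ⟨hf.toFinset.sup (wordLength S'), fun x y h => ?_⟩
  simp only [wdist] at h ⊢
  have hmem : x⁻¹ * y ∈ hf.toFinset := by
    rw [hf.mem_toFinset]
    simp only [Set.mem_ofPred_eq]
    exact_mod_cast h
  have hle := Finset.le_sup (f := wordLength S') hmem
  exact_mod_cast hle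

/-- An undistorted subgroup of `G` contained in `V` is undistorted for the metric of `V`. -/
theorem exists_edge_bound {V : Subgroup G} {S' : Set V} (hS' : Subgroup.closure S' = ⊤)
    {S : Set G} {E : Subgroup G} (hEV : E ≤ V) (hE : FGUndistorted S E) :
    ∃ K : ℕ, ∀ x y : V, ((x⁻¹ * y : V) : G) ∈ E →
      wdist S' x y ≤ K * (wdist S (x : G) (y : G) + 1) := by
  classical
  obtain ⟨T, hT, C, hC, hTC⟩ := hE
  let f : E →* V := Subgroup.inclusion hEV
  let c := T.sup fun t => wordLength S' (f t)
  have hc : ∀ t ∈ (T : Set E), wordLength S' (f t) ≤ c := fun t ht =>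
    Finset.le_sup (f := fun t => wordLength S' (f t)) ht
  refine ⟨c * ⌈C⌉₊, fun x y h => ?_⟩
  have h1 := wordLength_map_le hT hS' f hc ⟨_, h⟩
  have h2 := (hTC 1 ⟨_, h⟩).1
  simp only [wdist, inv_one, one_mul, Subgroup.coe_one] at h2 ⊢
  have h3 : f ⟨_, h⟩ = x⁻¹ * y := Subtype.ext rfl
  rw [h3] at h1
  have h1' : (wordLength S' (x⁻¹ * y) : ℝ) ≤ c * wordLength (T : Set E) ⟨_, h⟩ := by
    exact_mod_cast h1
  have h4 : (C : ℝ) ≤ ⌈C⌉₊ := Nat.le_ceil C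
  change (wordLength (T : Set E) ⟨_, h⟩ : ℝ) ≤ C * (wordLength S ((x : G)⁻¹ * y)) + C at h2
  push_cast
  calc (wordLength S' (x⁻¹ * y) : ℝ) ≤ c * wordLength (T : Set E) ⟨_, h⟩ := h1'
    _ ≤ c * (C * (wordLength S ((x : G)⁻¹ * y)) + C) := by gcongr
    _ = c * (C * (wordLength S ((x : G)⁻¹ * y) + 1)) := by ring
    _ ≤ c * (⌈C⌉₊ * (wordLength S ((x : G)⁻¹ * y) + 1)) := by gcongr
    _ = _ := by ring

variable {VT : Type*} [MulAction G VT]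

/-- The data extracted from the action: the constants `κ`, `K` and the finite set `B` of
neighbours of `p` govern the excursions of paths away from the stabiliser of `p`. -/
structure ExcData (T : SimpleGraph VT) (p : VT) (S : Set G)
    (S' : Set (MulAction.stabilizer G p)) (κ : ℕ) (B : Finset VT) (K : ℕ) : Prop where
  one_le : 1 ≤ K
  adj : ∀ b ∈ B, T.Adj p b
  exc : ∀ g h g' h' : G, wdist S g h ≤ 1 → wdist S g' h' ≤ 1 →
        h • p ≠ p → ¬ (awayGraph T p).Reachable (g • p) (h • p) →
        ¬ (awayGraph T p).Reachable (g' • p) (h' • p) →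
        (awayGraph T p).Reachable (h • p) (h' • p) →
        ∃ b ∈ B, ∃ v v' : MulAction.stabilizer G p, wdist S g v ≤ κ ∧
          wdist S g' v' ≤ κ ∧ ((v⁻¹ * v' : MulAction.stabilizer G p) : G) ∈ edgeStab G p b
  close : ∀ x y : MulAction.stabilizer G p, wdist S (x : G) (y : G) ≤ 2 * κ + 2 →
    wdist S' x y ≤ K
  edge : ∀ b ∈ B, ∀ x y : MulAction.stabilizer G p,
    ((x⁻¹ * y : MulAction.stabilizer G p) : G) ∈ edgeStab G p b →
    wdist S' x y ≤ K * (wdist S (x : G) (y : G) + 1)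

theorem exists_excData (T : SimpleGraph VT) (hT : T.IsTree)
    (hadj : ∀ (g : G) (a b : VT), T.Adj a b → T.Adj (g • a) (g • b)) (p : VT)
    (S : Finset G) (hS : Subgroup.closure (S : Set G) = ⊤)
    {S' : Set (MulAction.stabilizer G p)} (hS' : Subgroup.closure S' = ⊤)
    (hedge : ∀ b : VT, T.Adj p b → FGUndistorted (S : Set G) (edgeStab G p b)) :
    ∃ κ B K, ExcData T p (S : Set G) S' κ B K := by
  classical
  obtain ⟨κ, B, hB, hexc⟩ := exists_excursion T hT hadj p S hS
  obtain ⟨K₁, hK₁⟩ := exists_proper_bound S' S hS (2 * κ + 2)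
  have hK : ∀ b : VT, ∃ K : ℕ, T.Adj p b → ∀ x y : MulAction.stabilizer G p,
      ((x⁻¹ * y : MulAction.stabilizer G p) : G) ∈ edgeStab G p b →
      wdist S' x y ≤ K * (wdist (S : Set G) (x : G) (y : G) + 1) := by
    intro b
    by_cases hb : T.Adj p b
    · obtain ⟨K, hK⟩ := exists_edge_bound hS' (E := edgeStab G p b) inf_le_left (hedge b hb)
      exact ⟨K, fun _ => hK⟩
    · exact ⟨0, fun h => absurd h hb⟩
  choose K₂ hK₂ using hK
  refine ⟨κ, B, 1 + K₁ + B.sup K₂, by omega, hB, hexc, fun x y h => ?_, fun b hb x y h => ?_⟩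
  · refine (hK₁ x y (by exact_mod_cast h)).trans ?_
    norm_cast; omega
  · refine (hK₂ b (hB b hb) x y h).trans ?_
    have h0 := wdist_nonneg (S := (S : Set G)) (x : G) (y : G)
    have : K₂ b ≤ 1 + K₁ + B.sup K₂ := (Finset.le_sup hb).trans (by omega)
    gcongr

/-- The stabiliser of `p` is undistorted. -/
theorem ExcData.undistorted {T : SimpleGraph VT} {p : VT} {S : Set G}
    {S' : Set (MulAction.stabilizer G p)} {κ : ℕ} {B : Finset VT} {K : ℕ}
    (h : ExcData T p S S' κ B K) (hS : Subgroup.closure S = ⊤) (hS' : Subgroup.closure S' = ⊤) :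
    ∃ K' : ℕ, 1 ≤ K' ∧ ∀ x y : MulAction.stabilizer G p,
      wdist S' x y ≤ K' * (wdist S (x : G) (y : G) + 1) := by
  refine ⟨2 * (K * (2 * κ + 4)), by nlinarith [h.one_le], fun x y => ?_⟩
  obtain ⟨n, hn, hpath⟩ := conn_geod (A := Set.univ) hS (x : G) y (fun _ _ _ => trivial)
  obtain ⟨c, hc0, hcn, hc⟩ := hpath.exists_seq
  have hdist : ∀ i d : ℕ, i + d ≤ n → wdist S (c i) (c (i + d)) ≤ d := by
    intro i d
    induction d with
    | zero => intro _; simp [wdist_self]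
    | succ d ih =>
      intro hd
      have := wdist_triangle hS (c i) (c (i + d)) (c (i + (d + 1)))
      have h1 := (hc (i + d) (by omega)).1
      rw [show i + d + 1 = i + (d + 1) by ring] at h1
      have := ih (by omega)
      push_cast; linarith
  have hK1 : (1 : ℝ) ≤ K := by exact_mod_cast h.one_le
  have hκ0 : (0 : ℝ) ≤ κ := Nat.cast_nonneg κ
  have key := path_decomposition hS h.exc (fun i hi => (hc i hi).1)
    (R := fun m x y => wdist S' x y ≤ m) (M := K * (2 * κ + 4))
    (fun m m' x y hm hR => hR.trans (by exact_mod_cast hm))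
    (fun m m' x y z h1 h2 => by
      have := wdist_triangle hS' x y z
      push_cast; linarith)
    (fun i hi x y hx hy => by
      have h1 := h.close x y ((wdist_tri' hS _ (c i) _).trans (by linarith))
      push_cast; nlinarith)
    (fun i j hij hj x y hx hy hb => by
      obtain ⟨b, hb, hxy⟩ := hb
      have h1 := h.edge b hb x y hxy
      have h2 := wdist_tri' hS (x : G) (c i) y
      have h3 := wdist_triangle hS (c i) (c j) y
      obtain ⟨d, rfl⟩ : ∃ d, j = i + 1 + d := ⟨j - (i + 1), by omega⟩
      have h4 := hdist i (1 + d) (by omega)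
      rw [← add_assoc] at h4
      rw [show i + 1 + d - i = 1 + d by omega]
      push_cast at h4 ⊢
      have hd0 : (0 : ℝ) ≤ d := Nat.cast_nonneg d
      calc wdist S' x y ≤ K * (wdist S (x : G) (y : G) + 1) := h1
        _ ≤ K * ((2 * κ + 4) * (1 + d)) := by
          gcongr; nlinarith [mul_nonneg hκ0 hd0]
        _ = _ := by ring)
    x y hc0 hcn
  rw [← hn]
  refine key.trans ?_
  push_cast
  nlinarith [mul_nonneg (by linarith : (0 : ℝ) ≤ K) hκ0]

end Undistorted

/-! ### Transfer of detours from the group to the vertex group -/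

section Transfer

variable {G : Type*} [Group G] {VT : Type*} [MulAction G VT]

/-- Version of `wide_finite_scale` for cosets, uniform over finitely many edge groups. -/
theorem exists_wide_bound {V : Subgroup G} {S' : Set V} (hS' : Subgroup.closure S' = ⊤)
    {ι : Type*} (B : Finset ι) (E : ι → Subgroup G)
    (hw : ∀ b ∈ B, RelativelyWide S' ((E b).subgroupOf V)) {ε : ℝ} (hε : 0 < ε) :
    ∃ k : ℕ, 0 < k ∧ ∀ r : ℝ, (k : ℝ) ≤ r → ∀ b ∈ B, ∀ x y z : V,
      ((x⁻¹ * y : V) : G) ∈ E b → wdist S' x y ≤ r → ε * r ≤ wdist S' x z →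
      ε * r ≤ wdist S' y z →
      ∃ m : ℕ, (m : ℝ) ≤ k * r ∧ Conn S' {w | r / k < wdist S' w z} m x y := by
  classical
  have hk : ∀ b : ι, ∃ k : ℕ, 0 < k ∧ (b ∈ B → ∀ r : ℝ, (k : ℝ) ≤ r → ∀ x y z : V,
      ((x⁻¹ * y : V) : G) ∈ E b → wdist S' x y ≤ r → ε * r ≤ wdist S' x z →
      ε * r ≤ wdist S' y z →
      ∃ m : ℕ, (m : ℝ) ≤ k * r ∧ Conn S' {w | r / k < wdist S' w z} m x y) := by
    intro b
    by_cases hb : b ∈ B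
    · obtain ⟨k, hk0, hk⟩ := wide_finite_scale hS' (hw b hb) hε
      refine ⟨k, hk0, fun _ r hr x y z hxy h1 h2 h3 => ?_⟩
      obtain ⟨m, hm, hconn⟩ := hk r hr 1 (one_mem _) (x⁻¹ * y) (Subgroup.mem_subgroupOf.2 hxy)
        (x⁻¹ * z)
        (by rwa [← wdist_mul_left x, mul_one, mul_inv_cancel_left])
        (by rwa [← wdist_mul_left x, mul_one, mul_inv_cancel_left])
        (by rwa [wdist_mul_left])
      refine ⟨m, hm, ?_⟩
      have := hconn.translate (B := {w | r / k < wdist S' w z}) x (fun w hw => by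
        simp only [Set.mem_ofPred_eq] at hw ⊢
        rwa [← wdist_mul_left x, mul_inv_cancel_left] at hw)
      rwa [mul_one, mul_inv_cancel_left] at this
    · exact ⟨1, one_pos, fun h => absurd h hb⟩
  choose k hk0 hk using hk
  refine ⟨1 + B.sup k, by omega, fun r hr b hb x y z hxy h1 h2 h3 => ?_⟩
  have hkb : (k b : ℝ) ≤ ((1 + B.sup k : ℕ) : ℝ) := by
    exact_mod_cast (Finset.le_sup hb).trans (by omega)
  have hkb0 : (0 : ℝ) < k b := by exact_mod_cast hk0 b
  have hr0 : 0 < r := hkb0.trans_le (hkb.trans hr)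
  obtain ⟨m, hm, hc⟩ := hk b hb r (hkb.trans hr) x y z hxy h1 h2 h3
  refine ⟨m, hm.trans (by gcongr), hc.mono fun w hw => ?_⟩
  simp only [Set.mem_ofPred_eq] at hw ⊢
  exact lt_of_le_of_lt (by gcongr) hw

set_option maxHeartbeats 1000000 in
/-- An `N`-Morse geodesic ray of the vertex group admits no detour of linear length in the whole
group: such a detour could be pushed into the vertex group, replacing its excursions into branches
by paths avoiding a smaller ball, which exist because the edge groups are relatively wide. -/
theorem ExcData.no_detour {T : SimpleGraph VT} {p : VT} {S : Set G}
    {S' : Set (MulAction.stabilizer G p)} {κ : ℕ} {B : Finset VT} {K : ℕ}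
    (h : ExcData T p S S' κ B K) (hS : Subgroup.closure S = ⊤) (hS' : Subgroup.closure S' = ⊤)
    (hSS : ∀ s ∈ S', (s : G) ∈ S)
    (hw : ∀ b ∈ B, RelativelyWide S' ((edgeStab G p b).subgroupOf (MulAction.stabilizer G p)))
    (N : ℝ → ℝ) (L : ℝ) {δ : ℝ} (hδ : 0 < δ) :
    ∃ R : ℝ, ∀ γ : ℕ → MulAction.stabilizer G p, IsGeodSeq (wdist S') γ →
      MorseSet (wdist S') N (Set.range γ) → ∀ a s b : ℕ, a ≤ s → s ≤ b → ∀ r : ℝ, R ≤ r →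
      δ * r < wdist S (γ a : G) (γ s) → δ * r < wdist S (γ b : G) (γ s) →
      ∀ m : ℕ, (m : ℝ) ≤ L * r →
        ¬ Conn S {w | δ * r < wdist S w (γ s : G)} m (γ a : G) (γ b) := by
  have hK1 : (1 : ℝ) ≤ K := by exact_mod_cast h.one_le
  have hκ0 : (0 : ℝ) ≤ κ := Nat.cast_nonneg κ
  set L₁ : ℝ := max L 1 with hL₁
  have hL1 : 1 ≤ L₁ := le_max_right _ _
  -- all the excursions have size at most `Q * r` in the vertex group
  set Q : ℝ := K * (L₁ + 1) with hQ
  have hQ1 : 1 ≤ Q := by nlinarith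
  obtain ⟨k, hk0, hk⟩ := exists_wide_bound hS' B (fun b => edgeStab G p b) hw
    (ε := δ / (2 * Q)) (by positivity)
  have hk0' : (0 : ℝ) < k := by exact_mod_cast hk0
  set δ' : ℝ := min (δ / 8) (Q / k) with hδ'
  have hδ'0 : 0 < δ' := lt_min (by positivity) (by positivity)
  have hδ'8 : δ' ≤ δ / 8 := min_le_left _ _
  have hδ'Q : δ' ≤ Q / k := min_le_right _ _
  set M : ℕ := ⌈(1 + 4 * k * Q / δ) * (K * (2 * κ + 4))⌉₊ with hM
  have hM1 : (1 + 4 * k * Q / δ) * (K * (2 * κ + 4)) ≤ M := Nat.le_ceil _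
  have hkQ : 0 ≤ 4 * k * Q / δ := by positivity
  have hM2 : (K : ℝ) * (2 * κ + 4) ≤ M := by
    refine le_trans ?_ hM1
    have : 0 ≤ (K : ℝ) * (2 * κ + 4) := by positivity
    nlinarith
  obtain ⟨R₀, hR₀⟩ := morse_divergence hS' N (2 * M * L₁ + M) hδ'0
  refine ⟨max R₀ (1 + (2 * κ + 3) + 2 * (κ + 1) / δ + 8 * K / δ + k), ?_⟩
  intro γ hγ hγN a s b has hsb r hr hda hdb m hm hconn
  have hrR₀ : R₀ ≤ r := (le_max_left _ _).trans hr
  have hr' := (le_max_right _ _).trans hr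
  have e1 : 0 ≤ 2 * (κ + 1) / δ := by positivity
  have e2 : 0 ≤ 8 * K / δ := by positivity
  have hr1 : 1 ≤ r := by linarith
  have hr0 : 0 < r := by linarith
  have hrκ : 2 * κ + 3 ≤ r := by linarith
  have hrk : (k : ℝ) ≤ r := by linarith
  have hrδκ : 2 * (κ + 1) ≤ δ * r := by
    rw [mul_comm δ]; exact (div_le_iff₀ hδ).1 (by linarith)
  have hrδK : 8 * K ≤ δ * r := by
    rw [mul_comm δ]; exact (div_le_iff₀ hδ).1 (by linarith)
  have hδr : 0 < δ * r := by positivity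
  have hδ'r : δ' * r ≤ δ * r / 8 := by nlinarith
  have hmL : (m : ℝ) ≤ L₁ * r := hm.trans (by gcongr; exact le_max_left _ _)
  obtain ⟨c, hc0, hcm, hc⟩ := hconn.exists_seq
  have hcfar : ∀ i ≤ m, δ * r < wdist S (c i) (γ s : G) := by
    intro i hi
    cases i with
    | zero => rwa [hc0]
    | succ i => exact (hc i hi).2
  have hdist : ∀ i d : ℕ, i + d ≤ m → wdist S (c i) (c (i + d)) ≤ d := by
    intro i d
    induction d with
    | zero => intro _; simp [wdist_self]
    | succ d ih =>
      intro hd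
      have := wdist_triangle hS (c i) (c (i + d)) (c (i + (d + 1)))
      have h1 := (hc (i + d) (by omega)).1
      rw [show i + d + 1 = i + (d + 1) by ring] at h1
      have := ih (by omega)
      push_cast; linarith
  have hfar : ∀ i ≤ m, ∀ x : MulAction.stabilizer G p, wdist S (c i) x ≤ κ + 1 →
      δ * r / 2 ≤ wdist S' x (γ s) := by
    intro i hi x hx
    have h1 := wdist_coe_le hS' hS hSS x (γ s)
    have h2 := wdist_triangle hS (c i) x (γ s)
    linarith [hcfar i hi]
  have hgeod : ∀ x y : MulAction.stabilizer G p, δ * r / 2 ≤ wdist S' x (γ s) →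
      wdist S' x y ≤ δ * r / 4 → ∃ m' : ℕ, (m' : ℝ) = wdist S' x y ∧
        Conn S' {w | δ' * r < wdist S' w (γ s)} m' x y := by
    intro x y hx hxy
    refine conn_geod hS' x y fun w hw _ => ?_
    simp only [Set.mem_ofPred_eq]
    have := wdist_triangle hS' x w (γ s)
    linarith
  have key := path_decomposition hS h.exc (fun i hi => (hc i hi).1)
    (R := fun n x y => ∃ m' ≤ n, Conn S' {w | δ' * r < wdist S' w (γ s)} m' x y) (M := M)
    (fun n n' x y hn ⟨m', hm', hR⟩ => ⟨m', hm'.trans hn, hR⟩)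
    (fun n n' x y z ⟨m₁, hm₁, h1⟩ ⟨m₂, hm₂, h2⟩ => ⟨m₁ + m₂, by omega, h1.trans h2⟩)
    (fun i hi x y hx hy => by
      have h1 := h.close x y ((wdist_tri' hS _ (c i) _).trans (by linarith))
      obtain ⟨m', hm', hR⟩ := hgeod x y (hfar i hi x hx) (by linarith)
      refine ⟨m', ?_, hR⟩
      have : (m' : ℝ) ≤ M := by
        rw [hm']
        refine h1.trans (le_trans ?_ hM2)
        nlinarith
      exact_mod_cast this)
    (fun i j hij hj x y hx hy hb => by
      obtain ⟨b, hb, hxy⟩ := hb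
      obtain ⟨d, rfl⟩ : ∃ d, j = i + 1 + d := ⟨j - (i + 1), by omega⟩
      have h1 := h.edge b hb x y hxy
      have h2 := wdist_tri' hS (x : G) (c i) y
      have h3 := wdist_triangle hS (c i) (c (i + 1 + d)) y
      have h4 := hdist i (1 + d) (by omega)
      rw [← add_assoc] at h4
      rw [show i + 1 + d - i = 1 + d by omega]
      push_cast at h4
      have hd0 : (0 : ℝ) ≤ d := Nat.cast_nonneg d
      have hxy1 : wdist S' x y ≤ K * ((1 + d) + 2 * κ + 3) := by
        exact h1.trans (mul_le_mul_of_nonneg_left (by linarith) (by linarith))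
      have hxy2 : (K : ℝ) * ((1 + d) + 2 * κ + 3) ≤ K * (2 * κ + 4) * (1 + d) := by
        rw [mul_assoc]
        exact mul_le_mul_of_nonneg_left (by linarith [mul_nonneg hκ0 hd0]) (by linarith)
      by_cases hq : wdist S' x y ≤ δ * r / 4
      · obtain ⟨m', hm', hR⟩ := hgeod x y (hfar i (by omega) x hx) hq
        refine ⟨m', ?_, hR⟩
        have : (m' : ℝ) ≤ ((M * (1 + d) : ℕ) : ℝ) := by
          rw [hm']
          push_cast
          refine (hxy1.trans hxy2).trans ?_
          gcongr
        exact_mod_cast this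
      · push Not at hq
        have hdm : (1 + d : ℝ) ≤ L₁ * r := by
          refine le_trans ?_ hmL
          exact_mod_cast (by omega : 1 + d ≤ m)
        have hε : δ / (2 * Q) * (Q * r) = δ * r / 2 := by field_simp
        obtain ⟨m', hm', hR⟩ := hk (Q * r) (by nlinarith) b hb x y (γ s) hxy
          (hxy1.trans (by
            rw [hQ, mul_assoc]
            exact mul_le_mul_of_nonneg_left (by linarith) (by linarith)))
          (by rw [hε]; exact hfar i (by omega) x hx)
          (by rw [hε]; exact hfar _ hj y hy)
        refine ⟨m', ?_, hR.mono fun w hw => ?_⟩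
        · have : (m' : ℝ) ≤ ((M * (1 + d) : ℕ) : ℝ) := by
            push_cast
            have hr4 : r ≤ 4 / δ * (K * (2 * κ + 4) * (1 + d)) := by
              rw [div_mul_eq_mul_div, le_div_iff₀ hδ]
              linarith
            calc (m' : ℝ) ≤ k * (Q * r) := hm'
              _ ≤ k * (Q * (4 / δ * (K * (2 * κ + 4) * (1 + d)))) := by gcongr
              _ = (4 * k * Q / δ) * (K * (2 * κ + 4)) * (1 + d) := by ring
              _ ≤ M * (1 + d) := by
                gcongr
                refine le_trans ?_ hM1
                gcongr
                linarith
          exact_mod_cast this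
        · simp only [Set.mem_ofPred_eq] at hw ⊢
          refine lt_of_le_of_lt ?_ hw
          rw [mul_div_right_comm]
          gcongr)
    (γ a) (γ b) hc0 hcm
  obtain ⟨m', hm', hR⟩ := key
  refine hR₀ γ hγ hγN a s b has hsb r hrR₀ ?_ m' ?_ hR
  · have := wdist_coe_le hS' hS hSS (γ b) (γ s)
    linarith
  · have h1 : (m' : ℝ) ≤ 2 * M * m + M := by exact_mod_cast hm'
    have hM0 : (0 : ℝ) ≤ M := Nat.cast_nonneg M
    calc (m' : ℝ) ≤ 2 * M * m + M := h1
      _ ≤ 2 * M * (L₁ * r) + M * r := by gcongr; nlinarith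
      _ = _ := by ring

end Transfer

/-! ### Quasi-geodesics near a sequence without detours -/

section Near

variable {Γ : Type*} [Group Γ] {S : Set Γ}

/-- The edge path interpolating a quasi-geodesic. -/
theorem conn_along (hS : Subgroup.closure S = ⊤) {C a b : ℝ} {α : ℝ → Γ}
    (hα : IsQG (wdist S) C (Set.Icc a b) α) {A : Set Γ}
    (hA : ∀ τ ∈ Set.Icc a b, ∀ w, wdist S (α τ) w ≤ 2 * C → w ∈ A) (t : ℝ)
    (ht : t ∈ Set.Icc a b) (n : ℕ) :
    ∀ t' ∈ Set.Icc a b, |t - t'| ≤ n →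
      ∃ m : ℕ, (m : ℝ) ≤ 2 * C * n ∧ Conn S A m (α t) (α t') := by
  have hC := hα.1
  induction n with
  | zero =>
    intro t' _ h
    obtain rfl : t = t' := by
      have := abs_nonpos_iff.1 (h.trans (by simp))
      linarith
    exact ⟨0, by simp, Pth.nil _⟩
  | succ n ih =>
    intro t' ht' h
    push_cast at h
    have hn : (0 : ℝ) ≤ n := Nat.cast_nonneg n
    have hex : ∃ t'' ∈ Set.Icc a b, |t - t''| ≤ n ∧ |t'' - t'| ≤ 1 := by
      rw [abs_le] at h
      by_cases h1 : |t - t'| ≤ 1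
      · exact ⟨t, ht, by simp, h1⟩
      rcases le_total t t' with hle | hle
      · rw [abs_of_nonpos (by linarith)] at h1
        push Not at h1
        refine ⟨t' - 1, ⟨by linarith [ht.1], by linarith [ht'.2]⟩, ?_, ?_⟩
        · rw [abs_le]; constructor <;> linarith
        · rw [abs_le]; constructor <;> linarith
      · rw [abs_of_nonneg (by linarith)] at h1
        push Not at h1
        refine ⟨t' + 1, ⟨by linarith [ht'.1], by linarith [ht.2]⟩, ?_, ?_⟩
        · rw [abs_le]; constructor <;> linarith
        · rw [abs_le]; constructor <;> linarith
    obtain ⟨t'', ht'', h1, h2⟩ := hex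
    obtain ⟨m, hm, hc⟩ := ih t'' ht'' h1
    have hd : wdist S (α t'') (α t') ≤ 2 * C := by
      have := (hα.2 t'' ht'' t' ht').2
      nlinarith
    obtain ⟨m', hm', hc'⟩ := conn_geod hS (A := A) (α t'') (α t')
      (fun w hw _ => hA t'' ht'' w (hw.trans hd))
    refine ⟨m + m', ?_, hc.trans hc'⟩
    push_cast
    linarith

/-- If `γ` is quasi-isometrically embedded and has no detours of linear length, then every point
of `γ` between the endpoints of a quasi-geodesic `α` is close to `α`: otherwise `α` would provide
a detour around the point of `γ` furthest from `α`. -/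
theorem seq_near_qg (hS : Subgroup.closure S = ⊤) {K : ℕ} {C R : ℝ} {γ : ℕ → Γ}
    (hγ1 : ∀ m n : ℕ, wdist S (γ m) (γ n) ≤ |(m : ℝ) - n|)
    (hγ2 : ∀ m n : ℕ, |(m : ℝ) - n| ≤ K * (wdist S (γ m) (γ n) + 1))
    (hdet : ∀ a s b : ℕ, a ≤ s → s ≤ b → ∀ r : ℝ, R ≤ r →
      1 / 2 * r < wdist S (γ a) (γ s) → 1 / 2 * r < wdist S (γ b) (γ s) →
      ∀ m : ℕ, (m : ℝ) ≤ (2 + 2 * C * (C * (3 + 8 * K) + 1)) * r →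
        ¬ Conn S {w | 1 / 2 * r < wdist S w (γ s)} m (γ a) (γ b))
    {a b : ℝ} (hab : a ≤ b) {α : ℝ → Γ} (hα : IsQG (wdist S) C (Set.Icc a b) α)
    {i j : ℕ} (hi : α a = γ i) (hj : α b = γ j) (n : ℕ) (hin : i ≤ n) (hnj : n ≤ j) :
    ∃ t ∈ Set.Icc a b, wdist S (γ n) (α t) ≤ max R (4 * C) := by
  have hC := hα.1
  have haI : a ∈ Set.Icc a b := ⟨le_rfl, hab⟩
  have hbI : b ∈ Set.Icc a b := ⟨hab, le_rfl⟩
  -- the distance `f n` from `γ n` to `α` is attained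
  have hmin : ∀ n : ℕ, ∃ f : ℕ, (∃ t ∈ Set.Icc a b, wdist S (γ n) (α t) = f) ∧
      ∀ t ∈ Set.Icc a b, (f : ℝ) ≤ wdist S (γ n) (α t) := by
    intro n
    let F : Set ℕ := (fun t => wordLength S ((γ n)⁻¹ * α t)) '' Set.Icc a b
    have hF : F.Nonempty := ⟨_, a, haI, rfl⟩
    obtain ⟨t, ht, htf⟩ := Nat.sInf_mem hF
    refine ⟨sInf F, ⟨t, ht, by simp only [wdist]; exact_mod_cast htf⟩, fun t' ht' => ?_⟩
    simp only [wdist]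
    exact_mod_cast Nat.sInf_le (⟨t', ht', rfl⟩ : _ ∈ F)
  choose f hf hfmin using hmin
  obtain ⟨s, hs, hsmax⟩ := Finset.exists_max_image (Finset.Icc i j) f
    ⟨n, Finset.mem_Icc.2 ⟨hin, hnj⟩⟩
  rw [Finset.mem_Icc] at hs
  set D : ℕ := f s with hD
  suffices hle : (D : ℝ) ≤ max R (4 * C) by
    obtain ⟨t, ht, htf⟩ := hf n
    refine ⟨t, ht, ?_⟩
    rw [htf]
    refine le_trans ?_ hle
    exact_mod_cast hsmax n (Finset.mem_Icc.2 ⟨hin, hnj⟩)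
  by_contra hlt
  push Not at hlt
  have hDR : R ≤ D := ((le_max_left _ _).trans_lt hlt).le
  have hDC : 4 * C < D := (le_max_right _ _).trans_lt hlt
  have hD1 : (1 : ℝ) ≤ D := by linarith
  set q : ℕ := K * (3 * D + 1) with hq
  have hend : ∀ n : ℕ, i ≤ n → n ≤ j → (n = i ∨ n = j ∨ (q : ℝ) ≤ |(n : ℝ) - s|) →
      ∃ t ∈ Set.Icc a b, wdist S (γ n) (α t) ≤ D ∧ (D : ℝ) ≤ wdist S (γ n) (γ s) ∧
        ∀ w, wdist S (γ n) w ≤ wdist S (γ n) (α t) → 1 / 2 * D < wdist S w (γ s) := by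
    intro n hn1 hn2 hn
    have hendpt : ∀ t ∈ Set.Icc a b, α t = γ n →
        ∃ t ∈ Set.Icc a b, wdist S (γ n) (α t) ≤ D ∧ (D : ℝ) ≤ wdist S (γ n) (γ s) ∧
        ∀ w, wdist S (γ n) w ≤ wdist S (γ n) (α t) → 1 / 2 * D < wdist S w (γ s) := by
      intro t ht hαt
      have h1 := hfmin s t ht
      rw [hαt, wdist_comm hS, ← hD] at h1
      refine ⟨t, ht, ?_, h1, fun w hw => ?_⟩
      · rw [hαt, wdist_self]; linarith
      · rw [hαt, wdist_self] at hw
        have := wdist_triangle hS (γ n) w (γ s)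
        linarith
    rcases hn with rfl | rfl | hn
    · exact hendpt a haI hi
    · exact hendpt b hbI hj
    · obtain ⟨t, ht, htf⟩ := hf n
      have h1 : (f n : ℝ) ≤ D := by exact_mod_cast hsmax n (Finset.mem_Icc.2 ⟨hn1, hn2⟩)
      have h2 : (3 * D : ℝ) ≤ wdist S (γ n) (γ s) := by
        have h3 := hn.trans (hγ2 n s)
        rw [hq] at h3
        push_cast at h3
        by_contra hcon
        push Not at hcon
        have hK0 : (0 : ℝ) ≤ K := Nat.cast_nonneg K
        rcases hK0.eq_or_lt with hK0 | hK0
        · -- `K = 0` would force `γ` to have a single point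
          have h5 := hγ2 0 1
          rw [← hK0] at h5
          norm_num at h5
        · have := lt_of_mul_lt_mul_left (lt_of_lt_of_le
            (mul_lt_mul_of_pos_left (add_lt_add_left hcon 1) hK0) h3) hK0.le
          linarith
      refine ⟨t, ht, by linarith, by linarith, fun w hw => ?_⟩
      have := wdist_triangle hS (γ n) w (γ s)
      linarith
  set u : ℕ := max (s - q) i with hu
  set v : ℕ := min (s + q) j with hv
  have hu' : u = i ∨ u = j ∨ (q : ℝ) ≤ |(u : ℝ) - s| := by
    rcases le_total (s - q) i with h | h
    · left; omega
    · by_cases hqs : q ≤ s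
      · right; right
        have : u + q = s := by omega
        rw [← this, abs_sub_comm]
        push_cast
        rw [add_sub_cancel_left]
        exact le_abs_self _
      · left; omega
  have hv' : v = i ∨ v = j ∨ (q : ℝ) ≤ |(v : ℝ) - s| := by
    rcases le_total (s + q) j with h | h
    · right; right
      have : v = s + q := by omega
      rw [this]
      push_cast
      rw [add_sub_cancel_left]
      exact le_abs_self _
    · right; left; omega
  have huv : |(u : ℝ) - v| ≤ 2 * q := by
    have h1 : u ≤ v := by omega
    have h2 : v ≤ u + 2 * q := by omega
    have h1' : (u : ℝ) ≤ v := by exact_mod_cast h1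
    have h2' : (v : ℝ) ≤ u + 2 * q := by exact_mod_cast h2
    rw [abs_le]; constructor <;> linarith
  obtain ⟨tu, htu, hu1, hu2, hu3⟩ := hend u (by omega) (by omega) hu'
  obtain ⟨tv, htv, hv1, hv2, hv3⟩ := hend v (by omega) (by omega) hv'
  obtain ⟨m₁, hm₁, hc₁⟩ := conn_geod hS (A := {w | 1 / 2 * (D : ℝ) < wdist S w (γ s)})
    (γ u) (α tu) (fun w hw _ => hu3 w hw)
  obtain ⟨m₃, hm₃, hc₃⟩ := conn_geod hS (A := {w | 1 / 2 * (D : ℝ) < wdist S w (γ s)})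
    (α tv) (γ v) (fun w _ hw => hv3 w (by rwa [wdist_comm hS _ w, wdist_comm hS _ (α tv)]))
  have htt : |tu - tv| ≤ C * (2 * D + 2 * q + C) := by
    have h1 := (hα.2 tu htu tv htv).1
    have h2 := wdist_tri' hS (α tu) (γ u) (α tv)
    have h3 := wdist_triangle hS (γ u) (γ v) (α tv)
    have h4 := hγ1 u v
    have h5 : |tu - tv| / C ≤ 2 * D + 2 * q + C := by linarith
    rwa [div_le_iff₀ (by linarith), mul_comm] at h5
  obtain ⟨m₂, hm₂, hc₂⟩ := conn_along hS hα (A := {w | 1 / 2 * (D : ℝ) < wdist S w (γ s)})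
    (fun τ hτ w hw => by
      simp only [Set.mem_ofPred_eq]
      have h1 := hfmin s τ hτ
      have h2 := wdist_triangle hS (α τ) w (γ s)
      rw [wdist_comm hS, ← hD] at h1
      linarith)
    tu htu ⌈C * (2 * D + 2 * q + C)⌉₊ tv htv (htt.trans (Nat.le_ceil _))
  refine hdet u s v (by omega) (by omega) D hDR (by linarith) (by linarith) _ ?_
    ((hc₁.trans hc₂).trans hc₃)
  have hK0 : (0 : ℝ) ≤ K := Nat.cast_nonneg K
  have hqD : (q : ℝ) ≤ 4 * K * D := by
    rw [hq]; push_cast; nlinarith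
  have hceil : (⌈C * (2 * D + 2 * q + C)⌉₊ : ℝ) ≤ (C * (3 + 8 * K) + 1) * D := by
    have h0 : 0 ≤ C * (2 * D + 2 * q + C) := by positivity
    calc (⌈C * (2 * D + 2 * q + C)⌉₊ : ℝ) ≤ C * (2 * D + 2 * q + C) + 1 :=
          (Nat.ceil_lt_add_one h0).le
      _ ≤ C * (2 * D + 2 * (4 * K * D) + D) + D := by
          gcongr
          linarith
      _ = _ := by ring
  have hm₂' : (m₂ : ℝ) ≤ 2 * C * ((C * (3 + 8 * K) + 1) * D) := hm₂.trans (by gcongr)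
  have hm₃' : (m₃ : ℝ) ≤ D := by rw [hm₃, wdist_comm hS]; exact hv1
  push_cast
  linarith

/-- A quasi-geodesic joining two points of a sequence as in `seq_near_qg` stays close to this
sequence. -/
theorem qg_near_seq (hS : Subgroup.closure S = ⊤) {C D : ℝ} {γ : ℕ → Γ}
    (hγ1 : ∀ m n : ℕ, wdist S (γ m) (γ n) ≤ |(m : ℝ) - n|)
    {a b : ℝ} {α : ℝ → Γ} (hα : IsQG (wdist S) C (Set.Icc a b) α)
    {i j : ℕ} (hij : i ≤ j) (hi : α a = γ i) (hj : α b = γ j) (hD : 0 ≤ D)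
    (hnear : ∀ n, i ≤ n → n ≤ j → ∃ t ∈ Set.Icc a b, wdist S (γ n) (α t) ≤ D)
    {t : ℝ} (ht : t ∈ Set.Icc a b) :
    InNbhd (wdist S) (Set.range γ) (C * (C * (2 * D + 1 + C)) + C + D) (α t) := by
  have hC := hα.1
  -- it suffices that two nearby points of `α`, one on each side of `t`, are close to `γ n`
  have hfin : ∀ n, ∀ τ₁ ∈ Set.Icc a t, ∀ τ₂ ∈ Set.Icc t b, wdist S (γ n) (α τ₁) ≤ D →
      wdist S (γ n) (α τ₂) ≤ D + 1 →
      InNbhd (wdist S) (Set.range γ) (C * (C * (2 * D + 1 + C)) + C + D) (α t) := by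
    intro n τ₁ hτ₁ τ₂ hτ₂ h1 h2
    have hI1 : τ₁ ∈ Set.Icc a b := ⟨hτ₁.1, hτ₁.2.trans ht.2⟩
    have hI2 : τ₂ ∈ Set.Icc a b := ⟨ht.1.trans hτ₂.1, hτ₂.2⟩
    refine ⟨γ n, ⟨n, rfl⟩, ?_⟩
    have h3 := wdist_tri' hS (α τ₁) (γ n) (α τ₂)
    have h4 := (hα.2 τ₁ hI1 τ₂ hI2).1
    have h5 := (hα.2 t ht τ₁ hI1).2
    have h6 : |τ₁ - τ₂| / C ≤ 2 * D + 1 + C := by linarith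
    rw [div_le_iff₀ (by linarith), abs_of_nonpos (by linarith [hτ₁.2, hτ₂.1])] at h6
    have h7 : |t - τ₁| ≤ C * (2 * D + 1 + C) := by
      rw [abs_of_nonneg (by linarith [hτ₁.2])]
      linarith [hτ₂.1]
    have h8 := wdist_triangle hS (α t) (α τ₁) (γ n)
    rw [wdist_comm hS (α τ₁)] at h8
    have h9 : C * |t - τ₁| ≤ C * (C * (2 * D + 1 + C)) := by gcongr
    linarith
  by_contra hcon
  have key : ∀ n, i ≤ n → n ≤ j → ∃ τ ∈ Set.Icc a t, wdist S (γ n) (α τ) ≤ D := by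
    intro n hn
    induction n, hn using Nat.le_induction with
    | base =>
      intro _
      exact ⟨a, ⟨le_rfl, ht.1⟩, by rw [hi, wdist_self]; exact hD⟩
    | succ n hn ih =>
      intro hnj
      obtain ⟨τ₁, hτ₁, h1⟩ := ih (by omega)
      obtain ⟨τ₂, hτ₂, h2⟩ := hnear (n + 1) (by omega) hnj
      rcases le_total τ₂ t with h | h
      · exact ⟨τ₂, ⟨hτ₂.1, h⟩, h2⟩
      · refine absurd (hfin n τ₁ hτ₁ τ₂ ⟨h, hτ₂.2⟩ h1 ?_) hcon
        have h3 := wdist_triangle hS (γ n) (γ (n + 1)) (α τ₂)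
        have h4 := hγ1 n (n + 1)
        push_cast at h4
        rw [sub_add_cancel_left, abs_neg, abs_one] at h4
        linarith
  obtain ⟨τ, hτ, h⟩ := key j hij le_rfl
  exact hcon (hfin j τ hτ b ⟨ht.2, le_rfl⟩ h (by rw [hj, wdist_self]; linarith))

theorem IsQG.reverse {C a b : ℝ} {α : ℝ → Γ} (hα : IsQG (wdist S) C (Set.Icc a b) α) :
    IsQG (wdist S) C (Set.Icc a b) fun t => α (a + b - t) := by
  refine ⟨hα.1, fun s hs t ht => ?_⟩
  have := hα.2 (a + b - s) ⟨by linarith [hs.2], by linarith [hs.1]⟩ (a + b - t)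
    ⟨by linarith [ht.2], by linarith [ht.1]⟩
  rwa [show a + b - s - (a + b - t) = t - s by ring, abs_sub_comm t s] at this

theorem qg_near_of_no_detour (hS : Subgroup.closure S = ⊤) {K : ℕ} {C R : ℝ} {γ : ℕ → Γ}
    (hγ1 : ∀ m n : ℕ, wdist S (γ m) (γ n) ≤ |(m : ℝ) - n|)
    (hγ2 : ∀ m n : ℕ, |(m : ℝ) - n| ≤ K * (wdist S (γ m) (γ n) + 1))
    (hdet : ∀ a s b : ℕ, a ≤ s → s ≤ b → ∀ r : ℝ, R ≤ r →
      1 / 2 * r < wdist S (γ a) (γ s) → 1 / 2 * r < wdist S (γ b) (γ s) →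
      ∀ m : ℕ, (m : ℝ) ≤ (2 + 2 * C * (C * (3 + 8 * K) + 1)) * r →
        ¬ Conn S {w | 1 / 2 * r < wdist S w (γ s)} m (γ a) (γ b))
    {a b : ℝ} (hab : a ≤ b) {α : ℝ → Γ} (hα : IsQG (wdist S) C (Set.Icc a b) α)
    (ha : α a ∈ Set.range γ) (hb : α b ∈ Set.range γ) {t : ℝ} (ht : t ∈ Set.Icc a b) :
    InNbhd (wdist S) (Set.range γ)
      (C * (C * (2 * max R (4 * C) + 1 + C)) + C + max R (4 * C)) (α t) := by
  obtain ⟨i, hi⟩ := ha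
  obtain ⟨j, hj⟩ := hb
  have hD : 0 ≤ max R (4 * C) := le_max_of_le_right (by linarith [hα.1])
  rcases le_total i j with hij | hij
  · exact qg_near_seq hS hγ1 hα hij hi.symm hj.symm hD
      (seq_near_qg hS hγ1 hγ2 hdet hab hα hi.symm hj.symm) ht
  · have hi' : α (a + b - b) = γ i := by rw [add_sub_cancel_right, hi]
    have hj' : α (a + b - a) = γ j := by rw [add_sub_cancel_left, hj]
    have := qg_near_seq hS hγ1 hα.reverse hij hj' hi' hD
      (seq_near_qg hS hγ1 hγ2 hdet hab hα.reverse hj' hi') (t := a + b - t)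
      ⟨by linarith [ht.2], by linarith [ht.1]⟩
    simpa using this

end Near

/-! ### Uniform Morseness of rays of the vertex group -/

/-- **Corollary 5.3** (Statement 19, uniformly Morse).  Let `V` be a vertex group whose
incident edge groups are finitely generated, undistorted in `G` and relatively wide in
`V`.  For every Morse gauge `N` there is a Morse gauge `N'` such that every `N`-Morse
geodesic ray of `Δ = Cay(V, S_V)` is an `N'`-Morse quasi-geodesic of `Γ = Cay(G, S_G)`. -/
theorem uniformly_morse
    {G VT : Type*} [Group G] [MulAction G VT]
    (T : SimpleGraph VT) (hact : ActsOnTree G T) (p : VT)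
    (SG SV : Finset G) (hSGgen : Subgroup.closure (SG : Set G) = ⊤)
    (hSVsub : SV ⊆ SG)
    (hSVgen : Subgroup.closure (SV : Set G) = MulAction.stabilizer G p)
    (hedge : ∀ b : VT, T.Adj p b →
      FGUndistorted (SG : Set G) (edgeStab G p b) ∧
      RelWideIn (MulAction.stabilizer G p) (edgeStab G p b)) :
    ∀ N : ℝ → ℝ, ∃ N' : ℝ → ℝ,
      ∀ γ : ℕ → G, (∀ n, γ n ∈ MulAction.stabilizer G p) →
        IsGeodSeq (wdist (SV : Set G)) γ →
        MorseSet (wdist (SV : Set G)) N (Set.range γ) →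
        (∃ C : ℝ, IsQGSeq (wdist (SG : Set G)) C γ) ∧
        MorseSet (wdist (SG : Set G)) N' (Set.range γ) := by
  intro N
  -- the generating set of the stabiliser, as a set of elements of the stabiliser
  let S'f : Finset (MulAction.stabilizer G p) := SV.preimage Subtype.val
    Subtype.val_injective.injOn
  have hS'f : (S'f : Set (MulAction.stabilizer G p)) = Subtype.val ⁻¹' (SV : Set G) :=
    Finset.coe_preimage _ _
  set S' : Set (MulAction.stabilizer G p) := Subtype.val ⁻¹' (SV : Set G) with hS'def
  have hS' : Subgroup.closure S' = ⊤ := closure_preimage_subgroup hSVgen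
  have hdV : ∀ x y : MulAction.stabilizer G p,
      wdist S' x y = wdist (SV : Set G) (x : G) (y : G) := wdist_subgroup hSVgen
  have hSS : ∀ s ∈ S', (s : G) ∈ (SG : Set G) := fun s hs => hSVsub hs
  obtain ⟨κ, B, K, hexc⟩ := exists_excData T hact.1 hact.2.1 p SG hSGgen hS'
    fun b hb => (hedge b hb).1
  have hw : ∀ b ∈ B, RelativelyWide S'
      ((edgeStab G p b).subgroupOf (MulAction.stabilizer G p)) := by
    intro b hb
    have := (hedge b (hexc.adj b hb)).2 S'f (by rw [hS'f]; exact hS')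
    rwa [hS'f] at this
  obtain ⟨K', hK'1, hK'⟩ := hexc.undistorted hSGgen hS'
  choose R hR using fun C : ℝ => hexc.no_detour hSGgen hS' hSS hw N
    (2 + 2 * C * (C * (3 + 8 * K') + 1)) (δ := 1 / 2) (by norm_num)
  refine ⟨fun C => C * (C * (2 * max (R C) (4 * C) + 1 + C)) + C + max (R C) (4 * C), ?_⟩
  intro γ₀ hγV hgeod hmorse
  lift γ₀ to ℕ → MulAction.stabilizer G p using hγV with γ
  have hγgeod : IsGeodSeq (wdist S') γ := fun m n => (hdV _ _).trans (hgeod m n)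
  have hγmorse : MorseSet (wdist S') N (Set.range γ) := by
    intro C hC a b hab α hα ha hb t ht
    have hcoe : ∀ x ∈ Set.range γ, (x : G) ∈ Set.range fun n => (γ n : G) := by
      rintro _ ⟨n, rfl⟩
      exact ⟨n, rfl⟩
    obtain ⟨_, ⟨n, rfl⟩, h⟩ := hmorse C hC a b hab (fun t => (α t : G))
      ⟨hα.1, fun s hs t ht => by rw [← hdV]; exact hα.2 s hs t ht⟩
      (hcoe _ ha) (hcoe _ hb) t ht
    exact ⟨γ n, ⟨n, rfl⟩, by rw [hdV]; exact h⟩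
  have hγ1 : ∀ m n : ℕ, wdist (SG : Set G) (γ m : G) (γ n) ≤ |(m : ℝ) - n| := fun m n =>
    (wdist_coe_le hS' hSGgen hSS _ _).trans (hγgeod m n).le
  have hγ2 : ∀ m n : ℕ, |(m : ℝ) - n| ≤ K' * (wdist (SG : Set G) (γ m : G) (γ n) + 1) :=
    fun m n => (hγgeod m n).symm.le.trans (hK' _ _)
  have hK'1' : (1 : ℝ) ≤ K' := by exact_mod_cast hK'1
  refine ⟨⟨K', hK'1', fun m n => ⟨?_, ?_⟩⟩, ?_⟩
  · have h : |(m : ℝ) - n| / K' ≤ wdist (SG : Set G) (γ m : G) (γ n) + 1 := by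
      rw [div_le_iff₀ (by linarith), mul_comm]
      exact hγ2 m n
    linarith
  · have h0 := abs_nonneg ((m : ℝ) - n)
    have := hγ1 m n
    nlinarith
  · intro C hC a b hab α hα ha hb t ht
    exact qg_near_of_no_detour hSGgen (γ := fun n => (γ n : G)) hγ1 hγ2
      (hR C γ hγgeod hγmorse) hab hα ha hb ht

end MorseGoG
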